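/- arXiv:1901.02734 — 9 statements merged into one kernel-verified Lean document; each statement's English description precedes it below -/
import Mathlib

section
/- Let (Ω, μ) be a measure space with μ(Ω) < ∞, let a : Ω → ℝ be a bounded measurable function, G : Ω → ℝ a nonnegative measurable function, λ > 0 and t > 0 real numbers, and let u : Ω → ℝ be measurable with 0 ≤ u < 1 μ-almost everywhere. Assume the functions e^a(1−u)^{−2t−2}G, e^a(1−u)^{−(2t+3)}, e^a(1−u)^{−(t+3)} and e^a(1−u)^{−3}((1−u)^{−t}−1)² are μ-integrable, and that (h1) t²∫_Ω e^a(1−u)^{−2t−2}G dμ ≥ 2λ∫_Ω e^a(1−u)^{−3}((1−u)^{−t}−1)² dμ and (h2) (2t+1)∫_Ω e^a(1−u)^{−2t−2}G dμ ≤ λ∫_Ω e^a(1−u)^{−(2t+3)} dμ. Then (2/t² − 1/(2t+1)) ∫_Ω e^a(1−u)^{−(2t+3)} dμ ≤ (4/t²) ∫_Ω e^a(1−u)^{−(t+3)} dμ. -/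
open MeasureTheory Real

/-!
Put `v = 1 - u`. In the semistability inequality, expand `v ^ (-3) * (v ^ (-t) - 1) ^ 2` and discard
the nonnegative term `v ^ (-3)`. Both hypotheses then bound the same gradient integral, from below
and from above, by integrals of powers of `v`, and eliminating it leaves the claim.
-/

theorem rpow_neg_mul_rpow_neg_sub_one_sq {v : ℝ} (hv : 0 < v) (t q : ℝ) :
    v ^ (-q) * (v ^ (-t) - 1) ^ 2 = v ^ (-(2 * t + q)) - 2 * v ^ (-(t + q)) + v ^ (-q) := by
  have hsq : v ^ (-(2 * t + q)) = v ^ (-q) * (v ^ (-t) * v ^ (-t)) := by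
    rw [← rpow_add hv, ← rpow_add hv]
    ring_nf
  have hlin : v ^ (-(t + q)) = v ^ (-q) * v ^ (-t) := by
    rw [← rpow_add hv]
    ring_nf
  rw [hsq, hlin]
  ring

theorem integral_rpow_sub_two_mul_integral_rpow_le {Ω : Type*} [MeasurableSpace Ω]
    {μ : Measure Ω} {w v : Ω → ℝ} {t q : ℝ}
    (hw : ∀ᵐ x ∂μ, 0 ≤ w x) (hv : ∀ᵐ x ∂μ, 0 < v x)
    (hint_sq : Integrable (fun x => w x * v x ^ (-(2 * t + q))) μ)
    (hint_lin : Integrable (fun x => w x * v x ^ (-(t + q))) μ)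
    (hint_test : Integrable (fun x => w x * v x ^ (-q) * (v x ^ (-t) - 1) ^ 2) μ) :
    ∫ x, w x * v x ^ (-(2 * t + q)) ∂μ - 2 * ∫ x, w x * v x ^ (-(t + q)) ∂μ ≤
      ∫ x, w x * v x ^ (-q) * (v x ^ (-t) - 1) ^ 2 ∂μ := by
  rw [← integral_const_mul, ← integral_sub hint_sq (hint_lin.const_mul 2)]
  refine integral_mono_ae (hint_sq.sub (hint_lin.const_mul 2)) hint_test ?_
  filter_upwards [hw, hv] with x hwx hvx
  have hdropped : 0 ≤ w x * v x ^ (-q) := mul_nonneg hwx (rpow_nonneg hvx.le _)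
  calc w x * v x ^ (-(2 * t + q)) - 2 * (w x * v x ^ (-(t + q)))
      ≤ w x * (v x ^ (-(2 * t + q)) - 2 * v x ^ (-(t + q)) + v x ^ (-q)) := by linarith
    _ = w x * v x ^ (-q) * (v x ^ (-t) - 1) ^ 2 := by
      rw [← rpow_neg_mul_rpow_neg_sub_one_sq hvx, mul_assoc]

theorem div_sub_one_div_mul_le_of_mul_le_mul {𝕜 : Type*} [Field 𝕜] [LinearOrder 𝕜]
    [IsStrictOrderedRing 𝕜] {c r s lam D J K L : 𝕜} (hc : 0 ≤ c) (hr : 0 < r) (hs : 0 < s)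
    (hlam : 0 < lam) (hJ : K - 2 * L ≤ J) (hlower : c * lam * J ≤ r * D)
    (hupper : s * D ≤ lam * K) :
    (c / r - 1 / s) * K ≤ 2 * c / r * L := by
  have helim : c / r * (K - 2 * L) ≤ K / s :=
    calc c / r * (K - 2 * L) ≤ c / r * J := by gcongr
      _ = c * lam * J / (r * lam) := by field_simp
      _ ≤ r * D / (r * lam) := by gcongr
      _ = s * D / (s * lam) := by field_simp
      _ ≤ lam * K / (s * lam) := by gcongr
      _ = K / s := by field_simp
  linear_combination helim

/-- `D` plays the role of the weighted gradient integral. The nonlinearity `(1 - u) ^ (-p)`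
corresponds to `c = p` and `q = p + 1`; the MEMS case is `p = 2`. -/
theorem mems_key_combination_step_general {Ω : Type*} [MeasurableSpace Ω] {μ : Measure Ω}
    {w v : Ω → ℝ} {c q lam t D : ℝ} (hc : 0 ≤ c) (hlam : 0 < lam)
    (ht : t ≠ 0) (ht' : 0 < 2 * t + 1)
    (hw : ∀ᵐ x ∂μ, 0 ≤ w x) (hv : ∀ᵐ x ∂μ, 0 < v x)
    (hint_sq : Integrable (fun x => w x * v x ^ (-(2 * t + q))) μ)
    (hint_lin : Integrable (fun x => w x * v x ^ (-(t + q))) μ)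
    (hint_test : Integrable (fun x => w x * v x ^ (-q) * (v x ^ (-t) - 1) ^ 2) μ)
    (hstable : c * lam * ∫ x, w x * v x ^ (-q) * (v x ^ (-t) - 1) ^ 2 ∂μ ≤ t ^ 2 * D)
    (hweak : (2 * t + 1) * D ≤ lam * ∫ x, w x * v x ^ (-(2 * t + q)) ∂μ) :
    (c / t ^ 2 - 1 / (2 * t + 1)) * ∫ x, w x * v x ^ (-(2 * t + q)) ∂μ ≤
      2 * c / t ^ 2 * ∫ x, w x * v x ^ (-(t + q)) ∂μ :=
  div_sub_one_div_mul_le_of_mul_le_mul hc (by positivity) ht' hlam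
    (integral_rpow_sub_two_mul_integral_rpow_le hw hv hint_sq hint_lin hint_test) hstable hweak

theorem mems_key_combination_step
    {Ω : Type*} [MeasurableSpace Ω] (μ : Measure Ω) [IsFiniteMeasure μ]
    (a G u : Ω → ℝ) (lam t : ℝ)
    (ha : Measurable a) (hbd : ∃ C, ∀ x, |a x| ≤ C)
    (hG : Measurable G) (hGnonneg : ∀ x, 0 ≤ G x)
    (hu : Measurable u) (hu01 : ∀ᵐ x ∂μ, 0 ≤ u x ∧ u x < 1)
    (hlam : 0 < lam) (ht : 0 < t)
    (hint1 : Integrable (fun x => exp (a x) * (1 - u x) ^ (-(2*t+2)) * G x) μ)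
    (hint2 : Integrable (fun x => exp (a x) * (1 - u x) ^ (-(2*t+3))) μ)
    (hint3 : Integrable (fun x => exp (a x) * (1 - u x) ^ (-(t+3))) μ)
    (hint4 : Integrable
      (fun x => exp (a x) * (1 - u x) ^ (-(3:ℝ)) * ((1 - u x) ^ (-t) - 1)^2) μ)
    (h1 : t^2 * ∫ x, exp (a x) * (1 - u x) ^ (-(2*t+2)) * G x ∂μ ≥
      2 * lam * ∫ x, exp (a x) * (1 - u x) ^ (-(3:ℝ)) * ((1 - u x) ^ (-t) - 1)^2 ∂μ)
    (h2 : (2*t+1) * ∫ x, exp (a x) * (1 - u x) ^ (-(2*t+2)) * G x ∂μ ≤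
      lam * ∫ x, exp (a x) * (1 - u x) ^ (-(2*t+3)) ∂μ) :
    (2/t^2 - 1/(2*t+1)) * ∫ x, exp (a x) * (1 - u x) ^ (-(2*t+3)) ∂μ ≤
      (4/t^2) * ∫ x, exp (a x) * (1 - u x) ^ (-(t+3)) ∂μ := by
  have hv : ∀ᵐ x ∂μ, 0 < 1 - u x := hu01.mono fun x hx => sub_pos.mpr hx.2
  rw [show (4 : ℝ) = 2 * 2 by norm_num]
  exact mems_key_combination_step_general zero_le_two hlam ht.ne' (by positivity)
    (ae_of_all μ fun x => (exp_pos (a x)).le) hv hint2 hint3 hint4 h1 h2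
end

section
/- Let (Ω, μ) be a measure space with μ(Ω) < ∞, let a : Ω → ℝ be a bounded measurable function, G : Ω → ℝ a nonnegative measurable function, λ > 0, and let t be a real number with 0 < t < 2 + √6. Let u : Ω → ℝ be measurable with 0 ≤ u < 1 μ-almost everywhere, and assume the functions e^a(1−u)^{−2t−2}G, e^a(1−u)^{−(2t+3)}, e^a(1−u)^{−(t+3)} and e^a(1−u)^{−3}((1−u)^{−t}−1)² are μ-integrable. If (h1) t²∫_Ω e^a(1−u)^{−2t−2}G dμ ≥ 2λ∫_Ω e^a(1−u)^{−3}((1−u)^{−t}−1)² dμ and (h2) (2t+1)∫_Ω e^a(1−u)^{−2t−2}G dμ ≤ λ∫_Ω e^a(1−u)^{−(2t+3)} dμ, then ∫_Ω e^a(1−u)^{−(2t+3)} dμ ≤ [4(2t+1)/(2+4t−t²)]^{(2t+3)/t} ∫_Ω e^a dμ. -/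
open MeasureTheory Real

/-!
Put `g = (1 - u)⁻¹`, `w = e^a` and `M_r = ∫ w g^r`. Expanding the square in the semistability
inequality and eliminating the energy `∫ e^a (1 - u)^(-2t-2) G` between the two hypotheses gives
`M_{2t+3} ≤ K M_{t+3}` with `K = 4(2t+1)/(2+4t-t²)`, where `t < 2 + √6` makes the denominator
positive. The lower moment is then absorbed into the higher one. Instead of Hölder's inequality
we integrate Young's inequality `K g^r ≤ (r/q) g^q + (1 - r/q) K^(q/(q-r))`, whose constants are
such that the absorption loses nothing and the case `M_{2t+3} = 0` needs no separate treatment.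
-/

lemma rpow_le_one_add_rpow {x r q : ℝ} (hx : 0 ≤ x) (hr : 0 ≤ r) (hrq : r ≤ q) :
    x ^ r ≤ 1 + x ^ q := by
  rcases le_total x 1 with hx1 | hx1
  · linarith [rpow_le_one hx hx1 hr, rpow_nonneg hx q]
  · linarith [rpow_le_rpow_of_exponent_le hx1 hrq]

lemma mul_rpow_le_rpow_add_rpow {x K r q : ℝ} (hx : 0 ≤ x) (hK : 0 ≤ K) (hr : 0 ≤ r)
    (hrq : r < q) :
    K * x ^ r ≤ r / q * x ^ q + (1 - r / q) * K ^ (q / (q - r)) := by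
  have hq : 0 < q := hr.trans_lt hrq
  have hqr : q - r ≠ 0 := (sub_pos.2 hrq).ne'
  have hweight : 0 ≤ 1 - r / q := sub_nonneg.2 ((div_le_one hq).2 hrq.le)
  calc K * x ^ r = (x ^ q) ^ (r / q) * (K ^ (q / (q - r))) ^ (1 - r / q) := by
        rw [← rpow_mul hx, ← rpow_mul hK, mul_div_cancel₀ r hq.ne',
          show q / (q - r) * (1 - r / q) = 1 by field_simp, rpow_one, mul_comm]
    _ ≤ r / q * x ^ q + (1 - r / q) * K ^ (q / (q - r)) :=
        geom_mean_le_arith_mean2_weighted (by positivity) hweight (rpow_nonneg hx q)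
          (rpow_nonneg hK _) (add_sub_cancel _ _)

lemma rpow_mul_rpow_sub_one_sq {x s t : ℝ} (hx : 0 ≤ x) (hs : 0 ≤ s) (ht : 0 ≤ t) :
    x ^ s * (x ^ t - 1) ^ 2 = x ^ (2 * t + s) - 2 * x ^ (t + s) + x ^ s := by
  have htwo : x ^ (2 * t + s) = x ^ t * x ^ t * x ^ s := by
    rw [two_mul, rpow_add_of_nonneg hx (add_nonneg ht ht) hs, rpow_add_of_nonneg hx ht ht]
  rw [htwo, rpow_add_of_nonneg hx ht hs]
  ring

lemma sq_lt_two_mul_two_mul_add_one {t : ℝ} (ht : 0 < t) (ht' : t < 2 + √6) :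
    t ^ 2 < 2 * (2 * t + 1) := by
  have hdist : |t - 2| < √6 := by
    have htwo : 2 < √6 := lt_sqrt_of_sq_lt (by norm_num)
    exact abs_lt.2 ⟨by linarith, by linarith⟩
  have hsq : (t - 2) ^ 2 < 6 := by
    rw [← sq_abs]
    exact (lt_sqrt (abs_nonneg _)).1 hdist
  linarith

section WeightedMoments

variable {Ω : Type*} [MeasurableSpace Ω] {μ : Measure Ω} {w g : Ω → ℝ} {r q K : ℝ}

lemma integrable_mul_rpow_of_le (hw0 : 0 ≤ᵐ[μ] w) (hg0 : 0 ≤ᵐ[μ] g) (hg : AEMeasurable g μ)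
    (hr : 0 ≤ r) (hrq : r ≤ q) (hw : Integrable w μ)
    (hwq : Integrable (fun x => w x * g x ^ q) μ) :
    Integrable (fun x => w x * g x ^ r) μ := by
  refine (hw.add hwq).mono' (hw.1.mul (hg.pow_const r).aestronglyMeasurable) ?_
  filter_upwards [hw0, hg0] with x hwx hgx
  rw [norm_of_nonneg (mul_nonneg hwx (rpow_nonneg hgx r))]
  calc w x * g x ^ r ≤ w x * (1 + g x ^ q) :=
        mul_le_mul_of_nonneg_left (rpow_le_one_add_rpow hgx hr hrq) hwx
    _ = w x + w x * g x ^ q := by ring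

lemma mul_integral_mul_rpow_le (hw0 : 0 ≤ᵐ[μ] w) (hg0 : 0 ≤ᵐ[μ] g) (hg : AEMeasurable g μ)
    (hK : 0 ≤ K) (hr : 0 ≤ r) (hrq : r < q) (hw : Integrable w μ)
    (hwq : Integrable (fun x => w x * g x ^ q) μ) :
    K * ∫ x, w x * g x ^ r ∂μ ≤
      r / q * ∫ x, w x * g x ^ q ∂μ + (1 - r / q) * (K ^ (q / (q - r)) * ∫ x, w x ∂μ) := by
  have hwr := integrable_mul_rpow_of_le hw0 hg0 hg hr hrq.le hw hwq
  simp only [← integral_const_mul]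
  rw [← integral_add (hwq.const_mul _) ((hw.const_mul _).const_mul _)]
  refine integral_mono_ae (hwr.const_mul _)
    ((hwq.const_mul _).add ((hw.const_mul _).const_mul _)) ?_
  filter_upwards [hw0, hg0] with x hwx hgx
  linarith [mul_le_mul_of_nonneg_left (mul_rpow_le_rpow_add_rpow hgx hK hr hrq) hwx]

lemma integral_mul_rpow_le_of_le_mul_integral_mul_rpow (hw0 : 0 ≤ᵐ[μ] w) (hg0 : 0 ≤ᵐ[μ] g)
    (hg : AEMeasurable g μ) (hK : 0 ≤ K) (hr : 0 ≤ r) (hrq : r < q) (hw : Integrable w μ)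
    (hwq : Integrable (fun x => w x * g x ^ q) μ)
    (hle : ∫ x, w x * g x ^ q ∂μ ≤ K * ∫ x, w x * g x ^ r ∂μ) :
    ∫ x, w x * g x ^ q ∂μ ≤ K ^ (q / (q - r)) * ∫ x, w x ∂μ := by
  have hweight : 0 < 1 - r / q := sub_pos.2 ((div_lt_one (hr.trans_lt hrq)).2 hrq)
  have hyoung := hle.trans (mul_integral_mul_rpow_le hw0 hg0 hg hK hr hrq hw hwq)
  refine le_of_mul_le_mul_left ?_ hweight
  linarith

lemma integral_sub_two_mul_integral_le_integral_mul_sub_one_sq {s t : ℝ} (hw0 : 0 ≤ᵐ[μ] w)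
    (hg0 : 0 ≤ᵐ[μ] g) (hg : AEMeasurable g μ) (hs : 0 ≤ s) (ht : 0 ≤ t) (hw : Integrable w μ)
    (hwq : Integrable (fun x => w x * g x ^ (2 * t + s)) μ) :
    ∫ x, w x * g x ^ (2 * t + s) ∂μ - 2 * ∫ x, w x * g x ^ (t + s) ∂μ ≤
      ∫ x, w x * g x ^ s * (g x ^ t - 1) ^ 2 ∂μ := by
  have hmid : Integrable (fun x => w x * g x ^ (t + s)) μ :=
    integrable_mul_rpow_of_le hw0 hg0 hg (by positivity) (by linarith) hw hwq
  have hdiff : Integrable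
      (fun x => w x * g x ^ (2 * t + s) - 2 * (w x * g x ^ (t + s))) μ :=
    hwq.sub (hmid.const_mul 2)
  have hlow : Integrable (fun x => w x * g x ^ s) μ :=
    integrable_mul_rpow_of_le hw0 hg0 hg hs (by linarith) hw hwq
  have hlow_nonneg : 0 ≤ ∫ x, w x * g x ^ s ∂μ := by
    refine integral_nonneg_of_ae ?_
    filter_upwards [hw0, hg0] with x hwx hgx using mul_nonneg hwx (rpow_nonneg hgx s)
  have hexpand : (fun x => w x * g x ^ s * (g x ^ t - 1) ^ 2) =ᵐ[μ] fun x =>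
      w x * g x ^ (2 * t + s) - 2 * (w x * g x ^ (t + s)) + w x * g x ^ s := by
    filter_upwards [hg0] with x hgx
    rw [mul_assoc, rpow_mul_rpow_sub_one_sq hgx hs ht]
    ring
  rw [integral_congr_ae hexpand, integral_add hdiff hlow,
    integral_sub hwq (hmid.const_mul 2), integral_const_mul]
  linarith

end WeightedMoments

lemma le_mul_of_energy_bounds {lam b c energy square high mid : ℝ} (hlam : 0 < lam) (hc : 0 ≤ c)
    (hcb : c < 2 * b) (hsquare : high - 2 * mid ≤ square)
    (hstable : 2 * lam * square ≤ c * energy) (hweak : b * energy ≤ lam * high) :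
    high ≤ 4 * b / (2 * b - c) * mid := by
  have hb : 0 ≤ b := by linarith
  have hscaled : lam * (b * (2 * (high - 2 * mid))) ≤ lam * (c * high) :=
    calc lam * (b * (2 * (high - 2 * mid)))
        = b * (2 * lam * (high - 2 * mid)) := by ring
      _ ≤ b * (2 * lam * square) := by gcongr
      _ ≤ b * (c * energy) := by gcongr
      _ = c * (b * energy) := by ring
      _ ≤ c * (lam * high) := by gcongr
      _ = lam * (c * high) := by ring
  rw [div_mul_eq_mul_div, le_div_iff₀ (sub_pos.2 hcb)]
  linarith [le_of_mul_le_mul_left hscaled hlam]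

/-- Here `w` stands for `e^a`, `g` for `(1 - u)⁻¹` and `energy` for
`∫ e^a (1 - u)^(-2t-2) G`. -/
theorem mems_uniform_Lp_estimate_general
    {Ω : Type*} [MeasurableSpace Ω] {μ : Measure Ω} {w g : Ω → ℝ} {lam t energy : ℝ}
    (hw0 : 0 ≤ᵐ[μ] w) (hg0 : 0 ≤ᵐ[μ] g) (hg : AEMeasurable g μ)
    (hlam : 0 < lam) (ht : 0 < t) (ht' : t < 2 + √6)
    (hw : Integrable w μ) (hwq : Integrable (fun x => w x * g x ^ (2 * t + 3)) μ)
    (hstable : 2 * lam * ∫ x, w x * g x ^ (3 : ℝ) * (g x ^ t - 1) ^ 2 ∂μ ≤ t ^ 2 * energy)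
    (hweak : (2 * t + 1) * energy ≤ lam * ∫ x, w x * g x ^ (2 * t + 3) ∂μ) :
    ∫ x, w x * g x ^ (2 * t + 3) ∂μ ≤
      (4 * (2 * t + 1) / (2 + 4 * t - t ^ 2)) ^ ((2 * t + 3) / t) * ∫ x, w x ∂μ := by
  have hcoef : t ^ 2 < 2 * (2 * t + 1) := sq_lt_two_mul_two_mul_add_one ht ht'
  have hsquare := integral_sub_two_mul_integral_le_integral_mul_sub_one_sq hw0 hg0 hg
    zero_le_three ht.le hw hwq
  have hreverse : ∫ x, w x * g x ^ (2 * t + 3) ∂μ ≤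
      4 * (2 * t + 1) / (2 + 4 * t - t ^ 2) * ∫ x, w x * g x ^ (t + 3) ∂μ := by
    rw [show 2 + 4 * t - t ^ 2 = 2 * (2 * t + 1) - t ^ 2 by ring]
    exact le_mul_of_energy_bounds hlam (sq_nonneg t) hcoef hsquare hstable hweak
  have hK : 0 ≤ 4 * (2 * t + 1) / (2 + 4 * t - t ^ 2) :=
    div_nonneg (by positivity) (by linarith)
  have habsorb := integral_mul_rpow_le_of_le_mul_integral_mul_rpow hw0 hg0 hg hK
    (by positivity) (by linarith) hw hwq hreverse
  rwa [show 2 * t + 3 - (t + 3) = t by ring] at habsorb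

theorem mems_uniform_Lp_estimate
    {Ω : Type*} [MeasurableSpace Ω] (μ : Measure Ω) [IsFiniteMeasure μ]
    (a G u : Ω → ℝ) (lam t : ℝ)
    (ha : Measurable a) (hbd : ∃ C, ∀ x, |a x| ≤ C)
    (hG : Measurable G) (hGnonneg : ∀ x, 0 ≤ G x)
    (hu : Measurable u) (hu01 : ∀ᵐ x ∂μ, 0 ≤ u x ∧ u x < 1)
    (hlam : 0 < lam) (ht : 0 < t) (ht' : t < 2 + Real.sqrt 6)
    (hint1 : Integrable (fun x => exp (a x) * (1 - u x) ^ (-(2*t+2)) * G x) μ)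
    (hint2 : Integrable (fun x => exp (a x) * (1 - u x) ^ (-(2*t+3))) μ)
    (hint3 : Integrable (fun x => exp (a x) * (1 - u x) ^ (-(t+3))) μ)
    (hint4 : Integrable
      (fun x => exp (a x) * (1 - u x) ^ (-(3:ℝ)) * ((1 - u x) ^ (-t) - 1)^2) μ)
    (h1 : t^2 * ∫ x, exp (a x) * (1 - u x) ^ (-(2*t+2)) * G x ∂μ ≥
      2 * lam * ∫ x, exp (a x) * (1 - u x) ^ (-(3:ℝ)) * ((1 - u x) ^ (-t) - 1)^2 ∂μ)
    (h2 : (2*t+1) * ∫ x, exp (a x) * (1 - u x) ^ (-(2*t+2)) * G x ∂μ ≤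
      lam * ∫ x, exp (a x) * (1 - u x) ^ (-(2*t+3)) ∂μ) :
    ∫ x, exp (a x) * (1 - u x) ^ (-(2*t+3)) ∂μ ≤
      (4*(2*t+1)/(2+4*t-t^2)) ^ ((2*t+3)/t) * ∫ x, exp (a x) ∂μ := by
  obtain ⟨C, hC⟩ := hbd
  have hw : Integrable (fun x => exp (a x)) μ := by
    simpa only [one_mul] using ProbabilityTheory.integrable_exp_mul_of_mem_Icc (t := 1)
      ha.aemeasurable (ae_of_all μ fun x => abs_le.1 (hC x))
  have hg0 : 0 ≤ᵐ[μ] fun x => (1 - u x)⁻¹ := by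
    filter_upwards [hu01] with x hx using inv_nonneg.2 (sub_nonneg.2 hx.2.le)
  simp only [rpow_neg_eq_inv_rpow] at hint2 h1 h2 ⊢
  exact mems_uniform_Lp_estimate_general (ae_of_all μ fun x => (exp_pos (a x)).le) hg0
    (measurable_const.sub hu).inv.aemeasurable hlam ht ht' hw hint2 h1 h2
end

section
/- Let (Ω, μ) be a measure space with μ(Ω) < ∞, let a : Ω → ℝ be a bounded measurable function, G : Ω → ℝ a nonnegative measurable function, λ > 0 and t > 0 real numbers, and let u : Ω → ℝ be a nonnegative measurable function. Assume the functions e^{a+2tu}G, e^{a+(2t+1)u}, e^{a+(t+1)u} and e^{a+u}(e^{tu}−1)² are μ-integrable, and that (h1) t²∫_Ω e^{a+2tu}G dμ ≥ λ∫_Ω e^{a+u}(e^{tu}−1)² dμ and (h2) 2t∫_Ω e^{a+2tu}G dμ ≤ λ∫_Ω e^{a+(2t+1)u} dμ. Then (1/t² − 1/(2t)) ∫_Ω e^{a+(2t+1)u} dμ ≤ (2/t²) ∫_Ω e^{a+(t+1)u} dμ. -/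
open MeasureTheory Real

/-!
Write `E` for the energy `∫ e^{a+2tu} G`, `J = ∫ e^{a+u} (e^{tu} - 1)²` and `I = ∫ e^{a+(2t+1)u}`.
Eliminating `E` between the semistability inequality `λ J ≤ t² E` and the weak-solution bound
`2t E ≤ λ I` gives `2J ≤ t I`. Expanding the square in `J` and discarding its positive term
`∫ e^{a+u}` gives `I - 2 ∫ e^{a+(t+1)u} ≤ J`. Together these yield the claim after division
by `t²`.
-/

theorem exp_mul_exp_sub_one_sq (a t u : ℝ) :
    exp (a + u) * (exp (t * u) - 1) ^ 2 =
      exp (a + (2 * t + 1) * u) - 2 * exp (a + (t + 1) * u) + exp (a + u) := by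
  have exp_linear : exp (a + (t + 1) * u) = exp (a + u) * exp (t * u) := by
    rw [← exp_add]
    ring_nf
  have exp_quadratic : exp (a + (2 * t + 1) * u) = exp (a + u) * exp (t * u) ^ 2 := by
    rw [← exp_nat_mul, ← exp_add]
    push_cast
    ring_nf
  rw [exp_linear, exp_quadratic]
  ring

theorem integral_exp_sub_two_mul_le_integral_exp_mul_exp_sub_one_sq
    {Ω : Type*} [MeasurableSpace Ω] {μ : Measure Ω} {a u : Ω → ℝ} {t : ℝ}
    (hquad : Integrable (fun x => exp (a x + (2 * t + 1) * u x)) μ)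
    (hlin : Integrable (fun x => exp (a x + (t + 1) * u x)) μ)
    (hsq : Integrable (fun x => exp (a x + u x) * (exp (t * u x) - 1) ^ 2) μ) :
    (∫ x, exp (a x + (2 * t + 1) * u x) ∂μ) - 2 * ∫ x, exp (a x + (t + 1) * u x) ∂μ ≤
      ∫ x, exp (a x + u x) * (exp (t * u x) - 1) ^ 2 ∂μ := by
  rw [← integral_const_mul, ← integral_sub hquad (hlin.const_mul 2)]
  refine integral_mono (hquad.sub (hlin.const_mul 2)) hsq fun x => ?_
  simp only [exp_mul_exp_sub_one_sq]
  exact le_add_of_nonneg_right (exp_pos _).le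

theorem two_mul_le_mul_of_mul_le_sq_mul_of_two_mul_mul_le
    {R : Type*} [CommRing R] [LinearOrder R] [IsStrictOrderedRing R] {lam t E I J : R}
    (hlam : 0 < lam) (ht : 0 ≤ t) (hJ : lam * J ≤ t ^ 2 * E) (hI : 2 * t * E ≤ lam * I) :
    2 * J ≤ t * I := by
  refine le_of_mul_le_mul_left ?_ hlam
  calc lam * (2 * J) = 2 * (lam * J) := by ring
    _ ≤ 2 * (t ^ 2 * E) := by gcongr
    _ = t * (2 * t * E) := by ring
    _ ≤ t * (lam * I) := by gcongr
    _ = lam * (t * I) := by ring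

theorem gelfand_key_combination_step_general
    {Ω : Type*} [MeasurableSpace Ω] {μ : Measure Ω} {a u : Ω → ℝ} {lam t E : ℝ}
    (hlam : 0 < lam) (ht : 0 < t)
    (hquad : Integrable (fun x => exp (a x + (2 * t + 1) * u x)) μ)
    (hlin : Integrable (fun x => exp (a x + (t + 1) * u x)) μ)
    (hsq : Integrable (fun x => exp (a x + u x) * (exp (t * u x) - 1) ^ 2) μ)
    (hsemistable : lam * ∫ x, exp (a x + u x) * (exp (t * u x) - 1) ^ 2 ∂μ ≤ t ^ 2 * E)
    (hweak : 2 * t * E ≤ lam * ∫ x, exp (a x + (2 * t + 1) * u x) ∂μ) :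
    (1 / t ^ 2 - 1 / (2 * t)) * ∫ x, exp (a x + (2 * t + 1) * u x) ∂μ ≤
      (2 / t ^ 2) * ∫ x, exp (a x + (t + 1) * u x) ∂μ := by
  have energy_eliminated :=
    two_mul_le_mul_of_mul_le_sq_mul_of_two_mul_mul_le hlam ht.le hsemistable hweak
  have square_expanded :=
    integral_exp_sub_two_mul_le_integral_exp_mul_exp_sub_one_sq hquad hlin hsq
  set I := ∫ x, exp (a x + (2 * t + 1) * u x) ∂μ
  set L := ∫ x, exp (a x + (t + 1) * u x) ∂μ
  calc (1 / t ^ 2 - 1 / (2 * t)) * I = (I - t * I / 2) / t ^ 2 := by field_simp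
    _ ≤ 2 * L / t ^ 2 := by
      gcongr
      linarith
    _ = 2 / t ^ 2 * L := by ring

theorem gelfand_key_combination_step
    {Ω : Type*} [MeasurableSpace Ω] (μ : Measure Ω) [IsFiniteMeasure μ]
    (a G u : Ω → ℝ) (lam t : ℝ)
    (ha : Measurable a) (hbd : ∃ C, ∀ x, |a x| ≤ C)
    (hG : Measurable G) (hGnonneg : ∀ x, 0 ≤ G x)
    (hu : Measurable u) (hu0 : ∀ x, 0 ≤ u x)
    (hlam : 0 < lam) (ht : 0 < t)
    (hint1 : Integrable (fun x => exp (a x + 2*t*u x) * G x) μ)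
    (hint2 : Integrable (fun x => exp (a x + (2*t+1)*u x)) μ)
    (hint3 : Integrable (fun x => exp (a x + (t+1)*u x)) μ)
    (hint4 : Integrable (fun x => exp (a x + u x) * (exp (t*u x) - 1)^2) μ)
    (h1 : t^2 * ∫ x, exp (a x + 2*t*u x) * G x ∂μ ≥
      lam * ∫ x, exp (a x + u x) * (exp (t*u x) - 1)^2 ∂μ)
    (h2 : 2*t * ∫ x, exp (a x + 2*t*u x) * G x ∂μ ≤
      lam * ∫ x, exp (a x + (2*t+1)*u x) ∂μ) :
    (1/t^2 - 1/(2*t)) * ∫ x, exp (a x + (2*t+1)*u x) ∂μ ≤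
      (2/t^2) * ∫ x, exp (a x + (t+1)*u x) ∂μ :=
  gelfand_key_combination_step_general hlam ht hint2 hint3 hint4 h1 h2
end

section
/- Let (Ω, μ) be a measure space with μ(Ω) < ∞, let a : Ω → ℝ be a bounded measurable function, G : Ω → ℝ a nonnegative measurable function, λ > 0, and let t be a real number with 0 < t < 2. Let u : Ω → ℝ be a nonnegative measurable function, and assume the functions e^{a+2tu}G, e^{a+(2t+1)u}, e^{a+(t+1)u} and e^{a+u}(e^{tu}−1)² are μ-integrable. If (h1) t²∫_Ω e^{a+2tu}G dμ ≥ λ∫_Ω e^{a+u}(e^{tu}−1)² dμ and (h2) 2t∫_Ω e^{a+2tu}G dμ ≤ λ∫_Ω e^{a+(2t+1)u} dμ, then ∫_Ω e^{a+(2t+1)u} dμ ≤ (4/(2−t))^{(2t+1)/t} ∫_Ω e^a dμ. -/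
open MeasureTheory Real

/-!
Write `I s = ∫ e^{a + su}`. Eliminating the energy `∫ e^{a + 2tu} G` between the two hypotheses
gives `∫ e^{a + u} (e^{tu} - 1)² ≤ (t / 2) I (2t + 1)`, while expanding the square bounds the left
side below by `I (2t + 1) - 2 I (t + 1)`. Since `t < 2`, the top moment can be absorbed:
`I (2t + 1) ≤ (4 / (2 - t)) I (t + 1)`. By Young's inequality a higher exponential moment controlled
by a lower one is controlled by the mass `I 0`.
-/

section GeometricMean

variable {Ω : Type*} [MeasurableSpace Ω] {μ : Measure Ω} {f g : Ω → ℝ} {α β c : ℝ}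

lemma integrable_rpow_mul_rpow (hf : Integrable f μ) (hg : Integrable g μ)
    (hf0 : 0 ≤ᵐ[μ] f) (hg0 : 0 ≤ᵐ[μ] g) (hα : 0 ≤ α) (hβ : 0 ≤ β) (hαβ : α + β = 1) :
    Integrable (fun x => f x ^ α * g x ^ β) μ := by
  have hmeas : AEStronglyMeasurable (fun x => f x ^ α * g x ^ β) μ :=
    ((hf.aemeasurable.pow_const α).mul (hg.aemeasurable.pow_const β)).aestronglyMeasurable
  refine ((hf.const_mul α).add (hg.const_mul β)).mono' hmeas ?_
  filter_upwards [hf0, hg0] with x hfx hgx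
  rw [norm_of_nonneg (mul_nonneg (rpow_nonneg hfx α) (rpow_nonneg hgx β))]
  exact geom_mean_le_arith_mean2_weighted hα hβ hfx hgx hαβ

lemma mul_rpow_mul_rpow_le {y z : ℝ} (hy : 0 ≤ y) (hz : 0 ≤ z) (hc : 0 ≤ c) (hα : 0 ≤ α)
    (hβ : 0 < β) (hαβ : α + β = 1) :
    c * (y ^ α * z ^ β) ≤ α * y + β * (c ^ β⁻¹ * z) := by
  have hscale : (c ^ β⁻¹ * z) ^ β = c * z ^ β := by
    rw [mul_rpow (rpow_nonneg hc _) hz, rpow_inv_rpow hc hβ.ne']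
  calc c * (y ^ α * z ^ β) = y ^ α * (c ^ β⁻¹ * z) ^ β := by rw [hscale]; ring
    _ ≤ α * y + β * (c ^ β⁻¹ * z) :=
      geom_mean_le_arith_mean2_weighted hα hβ.le hy (by positivity) hαβ

lemma integral_le_of_le_mul_integral_rpow_mul_rpow (hf : Integrable f μ) (hg : Integrable g μ)
    (hf0 : 0 ≤ᵐ[μ] f) (hg0 : 0 ≤ᵐ[μ] g) (hc : 0 ≤ c) (hα : 0 ≤ α) (hβ : 0 < β)
    (hαβ : α + β = 1) (h : ∫ x, f x ∂μ ≤ c * ∫ x, f x ^ α * g x ^ β ∂μ) :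
    ∫ x, f x ∂μ ≤ c ^ β⁻¹ * ∫ x, g x ∂μ := by
  have hgc : Integrable (fun x => β * (c ^ β⁻¹ * g x)) μ := (hg.const_mul _).const_mul β
  have hyoung : c * ∫ x, f x ^ α * g x ^ β ∂μ
      ≤ α * ∫ x, f x ∂μ + β * (c ^ β⁻¹ * ∫ x, g x ∂μ) := by
    simp only [← integral_const_mul]
    rw [← integral_add (hf.const_mul α) hgc]
    refine integral_mono_ae ((integrable_rpow_mul_rpow hf hg hf0 hg0 hα hβ.le hαβ).const_mul c)
      ((hf.const_mul α).add hgc) ?_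
    filter_upwards [hf0, hg0] with x hfx hgx
    exact mul_rpow_mul_rpow_le hfx hgx hc hα hβ hαβ
  obtain rfl : α = 1 - β := eq_sub_of_add_eq hαβ
  refine le_of_mul_le_mul_left ?_ hβ
  linarith

end GeometricMean

section WeightedExpMoments

variable {Ω : Type*} [MeasurableSpace Ω] {μ : Measure Ω} {a u : Ω → ℝ} {c r s t : ℝ}

lemma exp_add_mul_eq_rpow_mul_rpow (hs : s ≠ 0) (b v : ℝ) :
    exp (b + r * v) = exp (b + s * v) ^ (r / s) * exp b ^ ((s - r) / s) := by
  rw [← exp_mul, ← exp_mul, ← exp_add]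
  congr 1
  field_simp
  ring

lemma integrable_exp_add_mul_of_le (hs : 0 < s) (hr : 0 ≤ r) (hrs : r ≤ s)
    (hint0 : Integrable (fun x => exp (a x)) μ)
    (hints : Integrable (fun x => exp (a x + s * u x)) μ) :
    Integrable (fun x => exp (a x + r * u x)) μ := by
  simp only [exp_add_mul_eq_rpow_mul_rpow (r := r) hs.ne']
  exact integrable_rpow_mul_rpow hints hint0 (ae_of_all _ fun x => (exp_pos _).le)
    (ae_of_all _ fun x => (exp_pos _).le) (by positivity)
    (div_nonneg (sub_nonneg.mpr hrs) hs.le) (by field_simp; ring)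

lemma integral_exp_add_mul_le_of_le_mul_integral (hr : 0 ≤ r) (hrs : r < s) (hc : 0 ≤ c)
    (hint0 : Integrable (fun x => exp (a x)) μ)
    (hints : Integrable (fun x => exp (a x + s * u x)) μ)
    (h : ∫ x, exp (a x + s * u x) ∂μ ≤ c * ∫ x, exp (a x + r * u x) ∂μ) :
    ∫ x, exp (a x + s * u x) ∂μ ≤ c ^ (s / (s - r)) * ∫ x, exp (a x) ∂μ := by
  have hs : 0 < s := hr.trans_lt hrs
  simp only [exp_add_mul_eq_rpow_mul_rpow (r := r) hs.ne'] at h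
  rw [← inv_div (s - r) s]
  exact integral_le_of_le_mul_integral_rpow_mul_rpow hints hint0
    (ae_of_all _ fun x => (exp_pos _).le) (ae_of_all _ fun x => (exp_pos _).le) hc (by positivity)
    (div_pos (sub_pos.mpr hrs) hs) (by field_simp; ring) h

lemma integral_exp_sub_two_mul_le_integral_exp_mul_sq
    (hint_two : Integrable (fun x => exp (a x + (2 * t + 1) * u x)) μ)
    (hint_one : Integrable (fun x => exp (a x + (t + 1) * u x)) μ)
    (hint_zero : Integrable (fun x => exp (a x + u x)) μ) :
    ∫ x, exp (a x + (2 * t + 1) * u x) ∂μ - 2 * ∫ x, exp (a x + (t + 1) * u x) ∂μ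
      ≤ ∫ x, exp (a x + u x) * (exp (t * u x) - 1) ^ 2 ∂μ := by
  have hexpand (x : Ω) : exp (a x + u x) * (exp (t * u x) - 1) ^ 2 =
      exp (a x + (2 * t + 1) * u x) - 2 * exp (a x + (t + 1) * u x) + exp (a x + u x) := by
    have htwo : exp (a x + (2 * t + 1) * u x) = exp (a x + u x) * exp (t * u x) ^ 2 := by
      rw [← exp_nat_mul, ← exp_add]; push_cast; ring_nf
    have hone : exp (a x + (t + 1) * u x) = exp (a x + u x) * exp (t * u x) := by
      rw [← exp_add]; ring_nf
    rw [htwo, hone]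
    ring
  have hint_diff : Integrable
      (fun x => exp (a x + (2 * t + 1) * u x) - 2 * exp (a x + (t + 1) * u x)) μ :=
    hint_two.sub (hint_one.const_mul 2)
  simp only [hexpand]
  rw [integral_add hint_diff hint_zero,
    integral_sub hint_two (hint_one.const_mul 2), integral_const_mul]
  exact le_add_of_nonneg_right (integral_nonneg fun x => (exp_pos _).le)

end WeightedExpMoments

theorem gelfand_uniform_Lp_estimate_general
    {Ω : Type*} [MeasurableSpace Ω] {μ : Measure Ω} {a u : Ω → ℝ} {lam t energy : ℝ}
    (hlam : 0 < lam) (ht : 0 < t) (ht' : t < 2)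
    (hint0 : Integrable (fun x => exp (a x)) μ)
    (hint : Integrable (fun x => exp (a x + (2 * t + 1) * u x)) μ)
    (hstable : lam * ∫ x, exp (a x + u x) * (exp (t * u x) - 1) ^ 2 ∂μ ≤ t ^ 2 * energy)
    (hweak : 2 * t * energy ≤ lam * ∫ x, exp (a x + (2 * t + 1) * u x) ∂μ) :
    ∫ x, exp (a x + (2 * t + 1) * u x) ∂μ ≤
      (4 / (2 - t)) ^ ((2 * t + 1) / t) * ∫ x, exp (a x) ∂μ := by
  have ht2 : 0 < 2 - t := sub_pos.mpr ht'
  have hsquare_le : ∫ x, exp (a x + u x) * (exp (t * u x) - 1) ^ 2 ∂μ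
      ≤ t / 2 * ∫ x, exp (a x + (2 * t + 1) * u x) ∂μ := by
    refine le_of_mul_le_mul_left ?_ hlam
    linarith [mul_le_mul_of_nonneg_left hweak (half_pos ht).le]
  have hle_square := integral_exp_sub_two_mul_le_integral_exp_mul_sq hint
    (integrable_exp_add_mul_of_le (by positivity) (by positivity) (by linarith) hint0 hint)
    (by simpa only [one_mul] using
      integrable_exp_add_mul_of_le (by positivity) zero_le_one (by linarith) hint0 hint)
  have habsorb : ∫ x, exp (a x + (2 * t + 1) * u x) ∂μ
      ≤ 4 / (2 - t) * ∫ x, exp (a x + (t + 1) * u x) ∂μ := by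
    rw [div_mul_eq_mul_div, le_div_iff₀ ht2]
    linarith
  have hbound := integral_exp_add_mul_le_of_le_mul_integral (by positivity) (by linarith)
    (by positivity) hint0 hint habsorb
  rwa [show 2 * t + 1 - (t + 1) = t by ring] at hbound

theorem gelfand_uniform_Lp_estimate
    {Ω : Type*} [MeasurableSpace Ω] (μ : Measure Ω) [IsFiniteMeasure μ]
    (a G u : Ω → ℝ) (lam t : ℝ)
    (ha : Measurable a) (hbd : ∃ C, ∀ x, |a x| ≤ C)
    (hG : Measurable G) (hGnonneg : ∀ x, 0 ≤ G x)
    (hu : Measurable u) (hu0 : ∀ x, 0 ≤ u x)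
    (hlam : 0 < lam) (ht : 0 < t) (ht' : t < 2)
    (hint1 : Integrable (fun x => exp (a x + 2*t*u x) * G x) μ)
    (hint2 : Integrable (fun x => exp (a x + (2*t+1)*u x)) μ)
    (hint3 : Integrable (fun x => exp (a x + (t+1)*u x)) μ)
    (hint4 : Integrable (fun x => exp (a x + u x) * (exp (t*u x) - 1)^2) μ)
    (h1 : t^2 * ∫ x, exp (a x + 2*t*u x) * G x ∂μ ≥
      lam * ∫ x, exp (a x + u x) * (exp (t*u x) - 1)^2 ∂μ)
    (h2 : 2*t * ∫ x, exp (a x + 2*t*u x) * G x ∂μ ≤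
      lam * ∫ x, exp (a x + (2*t+1)*u x) ∂μ) :
    ∫ x, exp (a x + (2*t+1)*u x) ∂μ ≤
      (4/(2-t)) ^ ((2*t+1)/t) * ∫ x, exp (a x) ∂μ := by
  obtain ⟨C, hC⟩ := hbd
  have hint0 : Integrable (fun x => exp (a x)) μ := by
    simpa only [one_mul] using ProbabilityTheory.integrable_exp_mul_of_le 1 C zero_le_one
      ha.aemeasurable (ae_of_all μ fun x => le_of_abs_le (hC x))
  exact gelfand_uniform_Lp_estimate_general hlam ht ht' hint0 hint2 h1 h2
end

section
/- Let N ≥ 1 be an integer, R > 0, let a, ψ : [0,R] → ℝ be continuous with ψ ≥ 0, and write w(r) = e^{a(r)}ψ(r)^{N−1}. Let λ > 0, 0 < t < 2 + √6, and let u : [0,R] → ℝ be continuously differentiable with 0 ≤ u(r) < 1 for every r ∈ [0,R] and u(R) = 0. Assume: (semistability) for every continuously differentiable ξ : [0,R] → ℝ with ξ(R) = 0 one has ∫₀^R w(r)(ξ'(r))² dr ≥ 2λ∫₀^R w(r)(1−u(r))^{−3}ξ(r)² dr; and (weak solution) for every continuously differentiable φ : [0,R] → ℝ with φ(R) = 0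 one has ∫₀^R w(r)u'(r)φ'(r) dr = λ∫₀^R w(r)(1−u(r))^{−2}φ(r) dr. Then ∫₀^R w(r)(1−u(r))^{−(2t+3)} dr ≤ [4(2t+1)/(2+4t−t²)]^{(2t+3)/t} ∫₀^R w(r) dr. -/
open MeasureTheory Real intervalIntegral

/-!
Since `((1 - u) ^ (-t))' ^ 2` and `u' * ((1 - u) ^ (-(2 * t + 1)))'` are both multiples of
`u' ^ 2 * (1 - u) ^ (-(2 * t + 2))`, testing semistability with `ξ = (1 - u) ^ (-t) - 1` and the
equation with `φ = (1 - u) ^ (-(2 * t + 1)) - 1` eliminates the gradient. What remains is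
`(2 + 4t - t²) ∫ w (1 - u) ^ (-(2t + 3)) ≤ 4 (2t + 1) ∫ w (1 - u) ^ (-(t + 3))`, whose right-hand
side has the weaker singularity. As `2 + 4t - t² > 0` for `0 < t < 2 + √6`, Young's inequality
absorbs it. Young replaces Hölder here because it applies pointwise, with no division by a possibly
vanishing integral.
-/

open Set Topology
open scoped Manifold

theorem exists_contDiff_pos_eventuallyEq_nhdsSet {E : Type*} [NormedAddCommGroup E]
    [NormedSpace ℝ E] [FiniteDimensional ℝ E] {n : ℕ∞} {g : E → ℝ} {K : Set E}
    (hg : ContDiff ℝ n g) (hK : IsClosed K) (hpos : ∀ x ∈ K, 0 < g x) :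
    ∃ v : E → ℝ, ContDiff ℝ n v ∧ (∀ x, 0 < v x) ∧ v =ᶠ[𝓝ˢ K] g := by
  have hopen : IsOpen {x | 0 < g x} := isOpen_lt continuous_const hg.continuous
  obtain ⟨χ, hχ_one, hχ_zero, hχ_mem⟩ :=
    exists_contMDiffMap_one_nhds_of_subset_interior (n := n) 𝓘(ℝ, E) hK
      (hopen.interior_eq.symm ▸ hpos : K ⊆ interior {x | 0 < g x})
  refine ⟨fun x ↦ χ x * g x + (1 - χ x), ?_, fun x ↦ ?_, ?_⟩
  · have hχ : ContDiff ℝ n χ := χ.contMDiff.contDiff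
    fun_prop
  · by_cases hx : 0 < g x
    · rcases (hχ_mem x).1.eq_or_lt with h | h
      · simp [← h]
      · exact add_pos_of_pos_of_nonneg (mul_pos h hx) (sub_nonneg.2 (hχ_mem x).2)
    · simp [hχ_zero x hx]
  · filter_upwards [hχ_one] with x hx
    simp [hx]

theorem continuousOn_one_sub_rpow {X : Type*} [TopologicalSpace X] {u : X → ℝ} {s : Set X}
    (hu : ContinuousOn u s) (hlt : ∀ x ∈ s, u x < 1) (p : ℝ) :
    ContinuousOn (fun x ↦ (1 - u x) ^ p) s :=
  (continuousOn_const.sub hu).rpow_const fun x hx ↦ .inl (sub_pos.2 (hlt x hx)).ne'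

theorem holderConjugate_add_div_div {x y : ℝ} (hx : 0 < x) (hy : 0 < y) :
    ((x + y) / x).HolderConjugate ((x + y) / y) := by
  simpa only [inv_div] using Real.HolderConjugate.inv_inv (a := x / (x + y)) (b := y / (x + y))
    (by positivity) (by positivity) (by field_simp)

theorem rpow_sub_rpow_div_le_rpow_sub_mul {x C p q : ℝ} (hpq : p.HolderConjugate q)
    (hx : 0 ≤ x) (hC : 0 ≤ C) : (x ^ p - C ^ q) / q ≤ x ^ p - C * x := by
  have young := Real.young_inequality_of_nonneg hx hC hpq
  have split : x ^ p = x ^ p / p + x ^ p / q := by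
    rw [div_eq_mul_inv, div_eq_mul_inv, ← mul_add, hpq.inv_add_inv_eq_one, mul_one]
  rw [sub_div]
  linarith

theorem two_add_four_mul_sub_sq_pos {t : ℝ} (ht : 0 ≤ t) (ht' : t < 2 + √6) :
    0 < 2 + 4 * t - t ^ 2 := by
  have factor : 2 + 4 * t - t ^ 2 = (2 + √6 - t) * (t + (√6 - 2)) := by
    linear_combination -Real.sq_sqrt (show (0 : ℝ) ≤ 6 by norm_num)
  have two_lt : 2 < √6 := Real.lt_sqrt_of_sq_lt (by norm_num)
  rw [factor]
  exact mul_pos (sub_pos.2 ht') (by linarith)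

theorem mul_rpow_sub_mul_rpow_le_test_integrands {v t : ℝ} (hv : 0 < v) (ht : -(1 / 2) ≤ t) :
    (2 + 4 * t - t ^ 2) * v ^ (-(2 * t + 3)) - 4 * (2 * t + 1) * v ^ (-(t + 3)) ≤
      2 * (2 * t + 1) * (v ^ (-3 : ℝ) * (v ^ (-t) - 1) ^ 2) -
        t ^ 2 * (v ^ (-2 : ℝ) * (v ^ (-(2 * t + 1)) - 1)) := by
  have rpow_three_add : v ^ (-(t + 3)) = v ^ (-3 : ℝ) * v ^ (-t) := by
    rw [← rpow_add hv]; ring_nf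
  have rpow_three_add_add : v ^ (-(2 * t + 3)) = v ^ (-3 : ℝ) * (v ^ (-t)) ^ 2 := by
    rw [sq, ← rpow_add hv, ← rpow_add hv]; ring_nf
  have rpow_two_add : v ^ (-2 : ℝ) * v ^ (-(2 * t + 1)) = v ^ (-3 : ℝ) * (v ^ (-t)) ^ 2 := by
    rw [← rpow_three_add_add, ← rpow_add hv]; ring_nf
  have dropped : 0 ≤ 2 * (2 * t + 1) * v ^ (-3 : ℝ) + t ^ 2 * v ^ (-2 : ℝ) := by
    have two_mul_add_one_nonneg : 0 ≤ 2 * t + 1 := by linarith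
    positivity
  rw [rpow_three_add, rpow_three_add_add]
  linear_combination dropped + t ^ 2 * rpow_two_add

theorem deriv_rpow_sub_one {v : ℝ → ℝ} {x p : ℝ} (hv : DifferentiableAt ℝ v x) (hx : v x ≠ 0) :
    deriv (fun r ↦ v r ^ p - 1) x = deriv v x * p * v x ^ (p - 1) :=
  ((hv.hasDerivAt.rpow_const (.inl hx)).sub_const 1).deriv

theorem mul_sq_deriv_rpow_eq_mul_deriv_mul_deriv_rpow {v : ℝ → ℝ} {x t : ℝ}
    (hv : DifferentiableAt ℝ v x) (hx : 0 < v x) :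
    (2 * t + 1) * deriv (fun r ↦ v r ^ (-t) - 1) x ^ 2 =
      t ^ 2 * (-deriv v x * deriv (fun r ↦ v r ^ (-(2 * t + 1)) - 1) x) := by
  have hpow : v x ^ (-(2 * t + 1) - 1) = (v x ^ (-t - 1)) ^ 2 := by
    rw [sq, ← rpow_add hx]; ring_nf
  rw [deriv_rpow_sub_one hv hx.ne', deriv_rpow_sub_one hv hx.ne', hpow]
  ring

section Weighted

variable {w u : ℝ → ℝ} {a b : ℝ}

theorem integral_weight_mul_rpow_le_of_le_mul {f : ℝ → ℝ} {p q C : ℝ} (hab : a ≤ b)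
    (hw : IntervalIntegrable w volume a b) (hw0 : ∀ r ∈ Icc a b, 0 ≤ w r)
    (hf : ContinuousOn f (Icc a b)) (hf0 : ∀ r ∈ Icc a b, 0 ≤ f r)
    (hpq : p.HolderConjugate q) (hC : 0 ≤ C)
    (h : ∫ r in a..b, w r * f r ^ p ≤ C * ∫ r in a..b, w r * f r) :
    ∫ r in a..b, w r * f r ^ p ≤ C ^ q * ∫ r in a..b, w r := by
  rw [← uIcc_of_le hab] at hf
  have hint : IntervalIntegrable (fun r ↦ w r * f r) volume a b := hw.mul_continuousOn hf
  have hintp : IntervalIntegrable (fun r ↦ w r * f r ^ p) volume a b :=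
    hw.mul_continuousOn (hf.rpow_const fun _ _ ↦ .inr hpq.nonneg)
  have young : (∫ r in a..b, (w r * f r ^ p - C ^ q * w r) / q) ≤
      ∫ r in a..b, (w r * f r ^ p - C * (w r * f r)) := by
    refine integral_mono_on hab ((hintp.sub (hw.const_mul _)).div_const _)
      (hintp.sub (hint.const_mul _)) fun r hr ↦ ?_
    have hwr := hw0 r hr
    linear_combination w r * rpow_sub_rpow_div_le_rpow_sub_mul hpq (hf0 r hr) hC
  rw [intervalIntegral.integral_div, integral_sub hintp (hw.const_mul _),
    integral_sub hintp (hint.const_mul _), intervalIntegral.integral_const_mul,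
    intervalIntegral.integral_const_mul] at young
  have absorbed := (div_le_iff₀ hpq.symm.pos).1 (young.trans (sub_nonpos.2 h))
  linarith

/-- Semistability of the weighted operator `ξ ↦ -(w ξ')' - μ w V ξ` on `(a, b)` with a Dirichlet
condition at `b`. For the linearisation at `u` of `-(w u')' = lam w f(u)`, take `μ V = lam f'(u)`.
Test functions on `[a, b]` are encoded as restrictions of `C¹` functions on `ℝ`. -/
def IsSemistableOn (w V : ℝ → ℝ) (μ a b : ℝ) : Prop :=
  ∀ ξ : ℝ → ℝ, ContDiff ℝ 1 ξ → ξ b = 0 →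
    μ * ∫ r in a..b, w r * V r * ξ r ^ 2 ≤ ∫ r in a..b, w r * deriv ξ r ^ 2

/-- `u` solves `-(w u')' = lam w g` on `(a, b)` weakly. Test functions vanish at `b` but are free
at `a`, which encodes the natural boundary condition `w u' = 0` at `a`. -/
def IsWeakSolutionOn (w g u : ℝ → ℝ) (lam a b : ℝ) : Prop :=
  ∀ φ : ℝ → ℝ, ContDiff ℝ 1 φ → φ b = 0 →
    ∫ r in a..b, w r * deriv u r * deriv φ r = lam * ∫ r in a..b, w r * g r * φ r

variable {V g : ℝ → ℝ} {μ lam : ℝ}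

theorem IsSemistableOn.mul_integral_le (hab : a ≤ b) (hstab : IsSemistableOn w V μ a b)
    (hweak : IsWeakSolutionOn w g u lam a b) {ξ φ : ℝ → ℝ} (hξ : ContDiff ℝ 1 ξ) (hξb : ξ b = 0)
    (hφ : ContDiff ℝ 1 φ) (hφb : φ b = 0) {α β : ℝ} (hα : 0 ≤ α)
    (hξφ : ∀ r ∈ Icc a b, α * deriv ξ r ^ 2 = β * (deriv u r * deriv φ r)) :
    α * (μ * ∫ r in a..b, w r * V r * ξ r ^ 2) ≤
      β * (lam * ∫ r in a..b, w r * g r * φ r) := calc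
  _ ≤ α * ∫ r in a..b, w r * deriv ξ r ^ 2 :=
      mul_le_mul_of_nonneg_left (hstab ξ hξ hξb) hα
  _ = β * ∫ r in a..b, w r * deriv u r * deriv φ r := by
      simp only [← intervalIntegral.integral_const_mul]
      refine integral_congr fun r hr ↦ ?_
      linear_combination w r * hξφ r (uIcc_of_le hab ▸ hr)
  _ = _ := by rw [hweak φ hφ hφb]

theorem IsSemistableOn.mul_integral_one_sub_rpow_le {t : ℝ} (hab : a ≤ b)
    (hstab : IsSemistableOn w V μ a b) (hweak : IsWeakSolutionOn w g u lam a b)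
    (hu : ContDiff ℝ 1 u) (hlt : ∀ r ∈ Icc a b, u r < 1) (hub : u b = 0) (ht : -(1 / 2) ≤ t) :
    (2 * t + 1) * (μ * ∫ r in a..b, w r * V r * ((1 - u r) ^ (-t) - 1) ^ 2) ≤
      t ^ 2 * (lam * ∫ r in a..b, w r * g r * ((1 - u r) ^ (-(2 * t + 1)) - 1)) := by
  -- `1 - u` may vanish off `[a, b]`, so its powers need not be admissible test functions on `ℝ`.
  obtain ⟨v, hv, hv_pos, hvu⟩ := exists_contDiff_pos_eventuallyEq_nhdsSet (n := 1)
    (contDiff_const.sub hu) isClosed_Icc fun r hr ↦ sub_pos.2 (hlt r hr)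
  have hv_eq : ∀ r ∈ Icc a b, v r = 1 - u r := fun r hr ↦ hvu.self_of_nhdsSet hr
  have hv_deriv : ∀ r ∈ Icc a b, deriv u r = -deriv v r := fun r hr ↦ by
    rw [(hvu.filter_mono (nhds_le_nhdsSet hr)).deriv_eq, deriv_const_sub, neg_neg]
  have hv_b : v b = 1 := by rw [hv_eq b (right_mem_Icc.2 hab), hub, sub_zero]
  have hv_test : ∀ p : ℝ, ContDiff ℝ 1 fun r ↦ v r ^ p - 1 := fun p ↦
    (hv.rpow_const_of_ne fun r ↦ (hv_pos r).ne').sub contDiff_const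
  have key := hstab.mul_integral_le hab hweak (hv_test (-t)) (by simp [hv_b])
    (hv_test (-(2 * t + 1))) (by simp [hv_b]) (α := 2 * t + 1) (β := t ^ 2) (by linarith)
    fun r hr ↦ by
      rw [hv_deriv r hr]
      exact mul_sq_deriv_rpow_eq_mul_deriv_mul_deriv_rpow
        (hv.differentiable one_ne_zero r) (hv_pos r)
  convert key using 3 <;>
  · refine integral_congr fun r hr ↦ ?_
    simp only [hv_eq r (uIcc_of_le hab ▸ hr)]

theorem mul_integral_one_sub_rpow_sub_le_test_integrals {t : ℝ} (hab : a ≤ b)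
    (hw : IntervalIntegrable w volume a b) (hw0 : ∀ r ∈ Icc a b, 0 ≤ w r) (ht : -(1 / 2) ≤ t)
    (hu : ContinuousOn u (Icc a b)) (hlt : ∀ r ∈ Icc a b, u r < 1) :
    (2 + 4 * t - t ^ 2) * (∫ r in a..b, w r * (1 - u r) ^ (-(2 * t + 3))) -
        4 * (2 * t + 1) * (∫ r in a..b, w r * (1 - u r) ^ (-(t + 3))) ≤
      2 * (2 * t + 1) *
          (∫ r in a..b, w r * (1 - u r) ^ (-3 : ℝ) * ((1 - u r) ^ (-t) - 1) ^ 2) -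
        t ^ 2 * ∫ r in a..b, w r * (1 - u r) ^ (-2 : ℝ) * ((1 - u r) ^ (-(2 * t + 1)) - 1) := by
  have hcont : ∀ p : ℝ, ContinuousOn (fun r ↦ (1 - u r) ^ p) (uIcc a b) :=
    uIcc_of_le hab ▸ continuousOn_one_sub_rpow hu hlt
  have hint : ∀ p : ℝ, IntervalIntegrable (fun r ↦ w r * (1 - u r) ^ p) volume a b :=
    fun p ↦ hw.mul_continuousOn (hcont p)
  have hint_stab : IntervalIntegrable
      (fun r ↦ w r * (1 - u r) ^ (-3 : ℝ) * ((1 - u r) ^ (-t) - 1) ^ 2) volume a b :=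
    (hint (-3)).mul_continuousOn (((hcont (-t)).sub continuousOn_const).pow 2)
  have hint_weak : IntervalIntegrable
      (fun r ↦ w r * (1 - u r) ^ (-2 : ℝ) * ((1 - u r) ^ (-(2 * t + 1)) - 1)) volume a b :=
    (hint (-2)).mul_continuousOn ((hcont (-(2 * t + 1))).sub continuousOn_const)
  simp only [← intervalIntegral.integral_const_mul]
  rw [← integral_sub ((hint _).const_mul _) ((hint _).const_mul _),
    ← integral_sub (hint_stab.const_mul _) (hint_weak.const_mul _)]
  refine integral_mono_on hab (((hint _).const_mul _).sub ((hint _).const_mul _))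
    ((hint_stab.const_mul _).sub (hint_weak.const_mul _)) fun r hr ↦ ?_
  have hwr := hw0 r hr
  linear_combination w r * mul_rpow_sub_mul_rpow_le_test_integrands (sub_pos.2 (hlt r hr)) ht

theorem mul_integral_one_sub_rpow_le_of_isSemistableOn {t : ℝ} (hab : a ≤ b)
    (hw : IntervalIntegrable w volume a b) (hw0 : ∀ r ∈ Icc a b, 0 ≤ w r)
    (hlam : 0 < lam) (ht : -(1 / 2) ≤ t)
    (hu : ContDiff ℝ 1 u) (hlt : ∀ r ∈ Icc a b, u r < 1) (hub : u b = 0)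
    (hstab : IsSemistableOn w (fun r ↦ (1 - u r) ^ (-3 : ℝ)) (2 * lam) a b)
    (hweak : IsWeakSolutionOn w (fun r ↦ (1 - u r) ^ (-2 : ℝ)) u lam a b) :
    (2 + 4 * t - t ^ 2) * ∫ r in a..b, w r * (1 - u r) ^ (-(2 * t + 3)) ≤
      4 * (2 * t + 1) * ∫ r in a..b, w r * (1 - u r) ^ (-(t + 3)) := by
  have tested := hstab.mul_integral_one_sub_rpow_le hab hweak hu hlt hub ht
  refine sub_nonpos.1 <| (mul_integral_one_sub_rpow_sub_le_test_integrals hab hw hw0 ht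
    hu.continuous.continuousOn hlt).trans <| nonpos_of_mul_nonpos_right ?_ hlam
  linear_combination tested

theorem radial_mems_uniform_estimate_general {t : ℝ} (hab : a ≤ b)
    (hw : IntervalIntegrable w volume a b) (hw0 : ∀ r ∈ Icc a b, 0 ≤ w r)
    (hlam : 0 < lam) (ht : 0 < t) (ht' : t < 2 + √6)
    (hu : ContDiff ℝ 1 u) (hlt : ∀ r ∈ Icc a b, u r < 1) (hub : u b = 0)
    (hstab : IsSemistableOn w (fun r ↦ (1 - u r) ^ (-3 : ℝ)) (2 * lam) a b)
    (hweak : IsWeakSolutionOn w (fun r ↦ (1 - u r) ^ (-2 : ℝ)) u lam a b) :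
    ∫ r in a..b, w r * (1 - u r) ^ (-(2 * t + 3)) ≤
      (4 * (2 * t + 1) / (2 + 4 * t - t ^ 2)) ^ ((2 * t + 3) / t) * ∫ r in a..b, w r := by
  have hd := two_add_four_mul_sub_sq_pos ht.le ht'
  have hpq : ((2 * t + 3) / (t + 3)).HolderConjugate ((2 * t + 3) / t) := by
    convert holderConjugate_add_div_div (show 0 < t + 3 by linarith) ht using 2 <;> ring
  have hpos : ∀ r ∈ Icc a b, 0 < 1 - u r := fun r hr ↦ sub_pos.2 (hlt r hr)
  have hpow : ∫ r in a..b, w r * ((1 - u r) ^ (-(t + 3))) ^ ((2 * t + 3) / (t + 3)) =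
      ∫ r in a..b, w r * (1 - u r) ^ (-(2 * t + 3)) := by
    refine integral_congr fun r hr ↦ ?_
    rw [← rpow_mul (hpos r (uIcc_of_le hab ▸ hr)).le, neg_mul, mul_div_cancel₀ _ (by positivity)]
  rw [← hpow]
  refine integral_weight_mul_rpow_le_of_le_mul hab hw hw0
    (continuousOn_one_sub_rpow hu.continuous.continuousOn hlt _)
    (fun r hr ↦ rpow_nonneg (hpos r hr).le _) hpq (by positivity) ?_
  rw [hpow, div_mul_eq_mul_div, le_div_iff₀' hd]
  exact mul_integral_one_sub_rpow_le_of_isSemistableOn hab hw hw0 hlam (by linarith) hu hlt hub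
    hstab hweak

end Weighted

theorem radial_mems_uniform_estimate
    (N : ℕ) (hN : 1 ≤ N) (R : ℝ) (hR : 0 < R)
    (a ψ : ℝ → ℝ) (ha : ContinuousOn a (Set.Icc 0 R))
    (hψ : ContinuousOn ψ (Set.Icc 0 R)) (hψ0 : ∀ r ∈ Set.Icc (0:ℝ) R, 0 ≤ ψ r)
    (w : ℝ → ℝ) (hw : ∀ r, w r = exp (a r) * ψ r ^ (N - 1))
    (lam t : ℝ) (hlam : 0 < lam) (ht : 0 < t) (ht' : t < 2 + Real.sqrt 6)
    (u : ℝ → ℝ) (hu : ContDiff ℝ 1 u)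
    (hu01 : ∀ r ∈ Set.Icc (0:ℝ) R, 0 ≤ u r ∧ u r < 1) (huR : u R = 0)
    (hstab : ∀ ξ : ℝ → ℝ, ContDiff ℝ 1 ξ → ξ R = 0 →
      ∫ r in (0:ℝ)..R, w r * (deriv ξ r)^2 ≥
        2 * lam * ∫ r in (0:ℝ)..R, w r * (1 - u r) ^ (-(3:ℝ)) * (ξ r)^2)
    (hweak : ∀ φ : ℝ → ℝ, ContDiff ℝ 1 φ → φ R = 0 →
      ∫ r in (0:ℝ)..R, w r * deriv u r * deriv φ r =
        lam * ∫ r in (0:ℝ)..R, w r * (1 - u r) ^ (-(2:ℝ)) * φ r) :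
    ∫ r in (0:ℝ)..R, w r * (1 - u r) ^ (-(2*t+3)) ≤
      (4*(2*t+1)/(2+4*t-t^2)) ^ ((2*t+3)/t) * ∫ r in (0:ℝ)..R, w r := by
  obtain rfl : w = fun r ↦ exp (a r) * ψ r ^ (N - 1) := funext hw
  exact radial_mems_uniform_estimate_general hR.le
    ((ha.rexp.mul (hψ.pow _)).intervalIntegrable_of_Icc hR.le)
    (fun r hr ↦ mul_nonneg (exp_pos _).le (pow_nonneg (hψ0 r hr) _))
    hlam ht ht' hu (fun r hr ↦ (hu01 r hr).2) huR hstab hweak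
end

section
/- Let N ≥ 1 be an integer, R > 0, let a, ψ : [0,R] → ℝ be continuous with ψ ≥ 0, and write w(r) = e^{a(r)}ψ(r)^{N−1}. Let λ > 0, 0 < t < 2, and let u : [0,R] → ℝ be continuously differentiable with u ≥ 0 and u(R) = 0. Assume: (semistability) for every continuously differentiable ξ : [0,R] → ℝ with ξ(R) = 0 one has ∫₀^R w(r)(ξ'(r))² dr ≥ λ∫₀^R w(r)e^{u(r)}ξ(r)² dr; and (weak solution) for every continuously differentiable φ : [0,R] → ℝ with φ(R) = 0 one has ∫₀^R w(r)u'(r)φ'(r) dr = λ∫₀^R w(r)e^{u(r)}φ(r) dr. Then ∫₀^R w(r)e^{(2t+1)u(r)} dr ≤ (4/(2−t))^{(2t+1)/t} ∫₀^R w(r) dr. -/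
open MeasureTheory Real intervalIntegral

/-!
Testing semistability with `g ∘ u` and the equation with `G ∘ u`, where `G' = (g')²`, produces the
same gradient term, which can be eliminated. For `f = exp` and `g x = exp (t x) - 1` what remains is
a bound of the integral of `exp ((2t+1) u)` by `4 / (2 - t)` times that of `exp ((t+1) u)`. As the
exponent on the left is the larger one, Young's inequality absorbs the right-hand side.
-/

/-- Weak formulation of `-(w u')' = lam w f(u)` on `(α, β)`. Test functions vanish at `β` only,
which encodes the natural boundary condition `w u' = 0` at `α`. -/
def IsWeakSolution (α β : ℝ) (w f : ℝ → ℝ) (lam : ℝ) (u : ℝ → ℝ) : Prop :=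
  ∀ φ : ℝ → ℝ, ContDiff ℝ 1 φ → φ β = 0 →
    ∫ r in α..β, w r * deriv u r * deriv φ r = lam * ∫ r in α..β, w r * f (u r) * φ r

/-- Nonnegativity of the second variation at `u` of the energy of `-(w u')' = lam w f(u)`, on test
functions vanishing at `β`. The argument `f'` stands for the derivative of `f`. -/
def IsSemistable (α β : ℝ) (w f' : ℝ → ℝ) (lam : ℝ) (u : ℝ → ℝ) : Prop :=
  ∀ ξ : ℝ → ℝ, ContDiff ℝ 1 ξ → ξ β = 0 →
    ∫ r in α..β, w r * (deriv ξ r) ^ 2 ≥ lam * ∫ r in α..β, w r * f' (u r) * (ξ r) ^ 2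

theorem exp_two_mul_mul (t x : ℝ) : exp (2 * t * x) = exp (t * x) ^ 2 := by
  rw [← exp_nat_mul, Nat.cast_ofNat, mul_assoc]

theorem mul_rpow_le_add_rpow {p q C x : ℝ} (hp : 0 ≤ p) (hpq : p < q) (hC : 0 ≤ C) (hx : 0 ≤ x) :
    C * x ^ p ≤ p / q * x ^ q + (1 - p / q) * C ^ (q / (q - p)) := by
  have hq : 0 < q := hp.trans_lt hpq
  have hqp : q - p ≠ 0 := (sub_pos.2 hpq).ne'
  have hweight : 0 ≤ 1 - p / q := sub_nonneg.2 ((div_le_one hq).2 hpq.le)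
  have young := geom_mean_le_arith_mean2_weighted (div_nonneg hp hq.le) hweight
    (rpow_nonneg hx q) (rpow_nonneg hC (q / (q - p))) (add_sub_cancel _ _)
  have hx_exponent : q * (p / q) = p := by field_simp
  have hC_exponent : q / (q - p) * (1 - p / q) = 1 := by field_simp
  rwa [← rpow_mul hx, ← rpow_mul hC, hx_exponent, hC_exponent, rpow_one, mul_comm] at young

theorem integral_mul_rpow_le_of_le_mul_integral_mul_rpow_s7 {X : Type*} [MeasurableSpace X]
    {μ : Measure X} {w g : X → ℝ} {p q C : ℝ} (hp : 0 ≤ p) (hpq : p < q) (hC : 0 ≤ C)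
    (hw_nonneg : 0 ≤ᵐ[μ] w) (hg_nonneg : 0 ≤ᵐ[μ] g) (hw : Integrable w μ)
    (hgp : Integrable (fun x => w x * g x ^ p) μ) (hgq : Integrable (fun x => w x * g x ^ q) μ)
    (hle : ∫ x, w x * g x ^ q ∂μ ≤ C * ∫ x, w x * g x ^ p ∂μ) :
    ∫ x, w x * g x ^ q ∂μ ≤ C ^ (q / (q - p)) * ∫ x, w x ∂μ := by
  set K := C ^ (q / (q - p))
  have absorb : ∫ x, w x * g x ^ q ∂μ ≤
      p / q * ∫ x, w x * g x ^ q ∂μ + (1 - p / q) * (K * ∫ x, w x ∂μ) := calc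
    _ ≤ ∫ x, C * (w x * g x ^ p) ∂μ := by rwa [MeasureTheory.integral_const_mul]
    _ ≤ ∫ x, p / q * (w x * g x ^ q) + (1 - p / q) * (K * w x) ∂μ := by
      refine integral_mono_ae (hgp.const_mul _)
        ((hgq.const_mul _).add ((hw.const_mul _).const_mul _)) ?_
      filter_upwards [hw_nonneg, hg_nonneg] with x hwx hgx
      linarith [mul_le_mul_of_nonneg_left (mul_rpow_le_add_rpow hp hpq hC hgx) hwx]
    _ = _ := by
      rw [MeasureTheory.integral_add (hgq.const_mul _) ((hw.const_mul _).const_mul _)]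
      simp only [MeasureTheory.integral_const_mul]
  have hweight : 0 < 1 - p / q := sub_pos.2 ((div_lt_one (hp.trans_lt hpq)).2 hpq)
  exact le_of_mul_le_mul_left (by linarith) hweight

section

variable {α β lam t : ℝ} {w u : ℝ → ℝ}

theorem IsSemistable.integral_mul_sq_comp_le {f f' g G : ℝ → ℝ}
    (hstab : IsSemistable α β w f' lam u) (hweak : IsWeakSolution α β w f lam u)
    (hlam : 0 < lam) (hu : ContDiff ℝ 1 u) (hg : ContDiff ℝ 1 g) (hG : ContDiff ℝ 1 G)
    (hderiv : ∀ x, deriv G x = deriv g x ^ 2) (hgβ : g (u β) = 0) (hGβ : G (u β) = 0) :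
    ∫ r in α..β, w r * f' (u r) * g (u r) ^ 2 ≤ ∫ r in α..β, w r * f (u r) * G (u r) := by
  have deriv_comp_u {h : ℝ → ℝ} (hh : ContDiff ℝ 1 h) (r : ℝ) :
      deriv (h ∘ u) r = deriv h (u r) * deriv u r :=
    deriv_comp r (hh.differentiable one_ne_zero _) (hu.differentiable one_ne_zero _)
  refine le_of_mul_le_mul_left ?_ hlam
  calc lam * ∫ r in α..β, w r * f' (u r) * g (u r) ^ 2
      ≤ ∫ r in α..β, w r * deriv (g ∘ u) r ^ 2 := hstab (g ∘ u) (hg.comp hu) hgβ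
    _ = ∫ r in α..β, w r * deriv u r * deriv (G ∘ u) r := by
      congr 1 with r
      rw [deriv_comp_u hg, deriv_comp_u hG, hderiv]
      ring
    _ = lam * ∫ r in α..β, w r * f (u r) * G (u r) := hweak (G ∘ u) (hG.comp hu) hGβ

theorem IsSemistable.integral_mul_exp_sub_one_sq_le
    (hstab : IsSemistable α β w exp lam u) (hweak : IsWeakSolution α β w exp lam u)
    (hlam : 0 < lam) (hu : ContDiff ℝ 1 u) (huβ : u β = 0) (t : ℝ) :
    ∫ r in α..β, w r * exp (u r) * (exp (t * u r) - 1) ^ 2 ≤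
      ∫ r in α..β, w r * exp (u r) * (t / 2 * (exp (2 * t * u r) - 1)) := by
  have hasDerivAt_exp_mul_sub_one (c x : ℝ) :
      HasDerivAt (fun x => exp (c * x) - 1) (exp (c * x) * c) x := by
    simpa using ((hasDerivAt_id x).const_mul c).exp.sub_const 1
  refine hstab.integral_mul_sq_comp_le (g := fun x => exp (t * x) - 1)
    (G := fun x => t / 2 * (exp (2 * t * x) - 1)) hweak hlam hu (by fun_prop) (by fun_prop)
    (fun x => ?_) (by simp [huβ]) (by simp [huβ])
  rw [(hasDerivAt_exp_mul_sub_one t x).deriv,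
    ((hasDerivAt_exp_mul_sub_one (2 * t) x).const_mul (t / 2)).deriv, exp_two_mul_mul]
  ring

theorem half_two_sub_mul_exp_sub_le (ht : -2 ≤ t) (x : ℝ) :
    (2 - t) / 2 * exp ((2 * t + 1) * x) - 2 * exp ((t + 1) * x) ≤
      exp x * (exp (t * x) - 1) ^ 2 - exp x * (t / 2 * (exp (2 * t * x) - 1)) := by
  have hexp_two_t_add_one : exp ((2 * t + 1) * x) = exp x * exp (t * x) ^ 2 := by
    rw [← exp_two_mul_mul, ← exp_add]; ring_nf
  have hexp_t_add_one : exp ((t + 1) * x) = exp x * exp (t * x) := by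
    rw [← exp_add]; ring_nf
  rw [exp_two_mul_mul, hexp_two_t_add_one, hexp_t_add_one]
  have hremainder : 0 ≤ (2 + t) / 2 * exp x := mul_nonneg (by linarith) (exp_pos x).le
  linarith

theorem IsSemistable.integral_mul_exp_le
    (hstab : IsSemistable α β w exp lam u) (hweak : IsWeakSolution α β w exp lam u)
    (hαβ : α ≤ β) (hw : IntervalIntegrable w volume α β) (hw_nonneg : ∀ r ∈ Set.Icc α β, 0 ≤ w r)
    (hlam : 0 < lam) (ht : -2 ≤ t) (ht' : t < 2) (hu : ContDiff ℝ 1 u) (huβ : u β = 0) :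
    ∫ r in α..β, w r * exp ((2 * t + 1) * u r) ≤
      4 / (2 - t) * ∫ r in α..β, w r * exp ((t + 1) * u r) := by
  have hu_cont : Continuous u := hu.continuous
  have hw_mul {h k : ℝ → ℝ} (hh : Continuous h) (hk : Continuous k) :
      IntervalIntegrable (fun r => w r * h r * k r) volume α β :=
    (hw.mul_continuousOn hh.continuousOn).mul_continuousOn hk.continuousOn
  have hw_mul_stab := hw_mul (h := fun r => exp (u r)) (k := fun r => (exp (t * u r) - 1) ^ 2)
    (by fun_prop) (by fun_prop)
  have hw_mul_weak := hw_mul (h := fun r => exp (u r))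
    (k := fun r => t / 2 * (exp (2 * t * u r) - 1)) (by fun_prop) (by fun_prop)
  have hw_mul_exp (c k : ℝ) :
      IntervalIntegrable (fun r => k * (w r * exp (c * u r))) volume α β :=
    (hw.mul_continuousOn (by fun_prop)).const_mul k
  have hmono : (2 - t) / 2 * (∫ r in α..β, w r * exp ((2 * t + 1) * u r)) -
      2 * (∫ r in α..β, w r * exp ((t + 1) * u r)) ≤
      (∫ r in α..β, w r * exp (u r) * (exp (t * u r) - 1) ^ 2) -
      ∫ r in α..β, w r * exp (u r) * (t / 2 * (exp (2 * t * u r) - 1)) := by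
    rw [← intervalIntegral.integral_const_mul, ← intervalIntegral.integral_const_mul,
      ← integral_sub (hw_mul_exp _ _) (hw_mul_exp _ _), ← integral_sub hw_mul_stab hw_mul_weak]
    refine integral_mono_on hαβ ((hw_mul_exp _ _).sub (hw_mul_exp _ _))
      (hw_mul_stab.sub hw_mul_weak) fun r hr => ?_
    linarith [mul_le_mul_of_nonneg_left (half_two_sub_mul_exp_sub_le ht (u r)) (hw_nonneg r hr)]
  have htest := hstab.integral_mul_exp_sub_one_sq_le hweak hlam hu huβ t
  rw [div_mul_eq_mul_div, le_div_iff₀ (sub_pos.2 ht')]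
  linarith

theorem radial_gelfand_uniform_estimate_general
    (hαβ : α ≤ β) (hw : IntervalIntegrable w volume α β) (hw_nonneg : ∀ r ∈ Set.Icc α β, 0 ≤ w r)
    (hlam : 0 < lam) (ht : 0 < t) (ht' : t < 2) (hu : ContDiff ℝ 1 u) (huβ : u β = 0)
    (hstab : IsSemistable α β w exp lam u) (hweak : IsWeakSolution α β w exp lam u) :
    ∫ r in α..β, w r * exp ((2 * t + 1) * u r) ≤
      (4 / (2 - t)) ^ ((2 * t + 1) / t) * ∫ r in α..β, w r := by
  have hexp (c r : ℝ) : exp (c * u r) = exp (u r) ^ c := by rw [← exp_mul, mul_comm]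
  have hw_mul (c : ℝ) :
      Integrable (fun r => w r * exp (u r) ^ c) (volume.restrict (Set.Ioc α β)) := by
    have hu_cont : Continuous u := hu.continuous
    simp only [← hexp]
    exact (hw.mul_continuousOn (by fun_prop)).1
  have hw_ae : 0 ≤ᵐ[volume.restrict (Set.Ioc α β)] w :=
    ae_restrict_of_forall_mem measurableSet_Ioc fun r hr =>
      hw_nonneg r (Set.Ioc_subset_Icc_self hr)
  have hle := hstab.integral_mul_exp_le hweak hαβ hw hw_nonneg hlam (by linarith) ht' hu huβ
  have hexponent : (2 * t + 1) / t = (2 * t + 1) / (2 * t + 1 - (t + 1)) := by ring_nf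
  simp only [hexp, integral_of_le hαβ] at hle ⊢
  rw [hexponent]
  exact integral_mul_rpow_le_of_le_mul_integral_mul_rpow_s7 (by linarith) (by linarith)
    (div_nonneg zero_le_four (sub_nonneg.2 ht'.le)) hw_ae (.of_forall fun r => (exp_pos _).le)
    hw.1 (hw_mul _) (hw_mul _) hle

end

theorem radial_gelfand_uniform_estimate
    (N : ℕ) (hN : 1 ≤ N) (R : ℝ) (hR : 0 < R)
    (a ψ : ℝ → ℝ) (ha : ContinuousOn a (Set.Icc 0 R))
    (hψ : ContinuousOn ψ (Set.Icc 0 R)) (hψ0 : ∀ r ∈ Set.Icc (0:ℝ) R, 0 ≤ ψ r)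
    (w : ℝ → ℝ) (hw : ∀ r, w r = exp (a r) * ψ r ^ (N - 1))
    (lam t : ℝ) (hlam : 0 < lam) (ht : 0 < t) (ht' : t < 2)
    (u : ℝ → ℝ) (hu : ContDiff ℝ 1 u)
    (hu0 : ∀ r ∈ Set.Icc (0:ℝ) R, 0 ≤ u r) (huR : u R = 0)
    (hstab : ∀ ξ : ℝ → ℝ, ContDiff ℝ 1 ξ → ξ R = 0 →
      ∫ r in (0:ℝ)..R, w r * (deriv ξ r)^2 ≥
        lam * ∫ r in (0:ℝ)..R, w r * exp (u r) * (ξ r)^2)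
    (hweak : ∀ φ : ℝ → ℝ, ContDiff ℝ 1 φ → φ R = 0 →
      ∫ r in (0:ℝ)..R, w r * deriv u r * deriv φ r =
        lam * ∫ r in (0:ℝ)..R, w r * exp (u r) * φ r) :
    ∫ r in (0:ℝ)..R, w r * exp ((2*t+1) * u r) ≤
      (4/(2-t)) ^ ((2*t+1)/t) * ∫ r in (0:ℝ)..R, w r := by
  obtain rfl : w = fun r => exp (a r) * ψ r ^ (N - 1) := funext hw
  exact radial_gelfand_uniform_estimate_general hR.le
    ((ha.rexp.mul (hψ.pow _)).intervalIntegrable_of_Icc hR.le)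
    (fun r hr => mul_nonneg (exp_pos _).le (pow_nonneg (hψ0 r hr) _))
    hlam ht ht' hu huR hstab hweak
end

section
/- Let N ≥ 1 be an integer, R > 0, let a, ψ : [0,R] → ℝ be continuous with ψ ≥ 0, and write w(r) = e^{a(r)}ψ(r)^{N−1}. Let λ > 0, m > 1, b > 0 and t > 0 with m − √(m(m−1)) < bt < m + √(m(m−1)), and let u : [0,R] → ℝ be continuously differentiable with u ≥ 0 and u(R) = 0. Assume: (semistability) for every continuously differentiable ξ : [0,R] → ℝ with ξ(R) = 0 one has ∫₀^R w(r)(ξ'(r))² dr ≥ λm∫₀^R w(r)(1+u(r))^{m−1}ξ(r)² dr; and (weak solution) for every continuously differentiable φ : [0,R] → ℝ with φ(R) = 0 one has ∫₀^R w(r)u'(r)φ'(r) dr = λ∫₀^R w(r)(1+u(r))^m φ(r) dr. Then ∫₀^R w(r)(1+u(r))^{2bt+m−1} dr ≤ [2m(2bt−1)/(m(2bt−1) − b²t²)]^{(2bt+m−1)/(bt)} ∫₀^R w(r) dr. -/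
open MeasureTheory Real intervalIntegral

/-!
Testing semistability with `ξ = F(u)` and the weak equation with `φ = G(u)`, where `G' = F'²`,
makes the two gradient terms coincide, so they cancel. For `F(u) = (1+u)^s - 1` with `s = bt`, what
remains is `P ≤ C Q`, where `P = ∫ w (1+u)^p`, `Q = ∫ w (1+u)^(p-s)`, `p = 2s + m - 1` and
`C = 2m(2s-1) / (m(2s-1) - s²)`; the window for `bt` is exactly the positivity of this denominator.
As `Q` carries the smaller exponent, Young's inequality absorbs it into `P`.
-/

section OneAddRpow

/-- A `C¹` function on all of `ℝ` that equals `(1 + x) ^ q - 1` for `0 ≤ x` and is affine for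
`x ≤ 0`. Test functions must be `C¹` on the whole line, while `u` is nonnegative only on the
interval of integration, so `(1 + u) ^ q - 1` itself need not be admissible. -/
noncomputable def oneAddRpowSubOne (q x : ℝ) : ℝ :=
  ∫ y in (0 : ℝ)..x, q * (1 + max y 0) ^ (q - 1)

lemma continuous_one_add_max_rpow (q : ℝ) : Continuous fun y : ℝ => (1 + max y 0) ^ q :=
  Continuous.rpow_const (by fun_prop) fun y => Or.inl (by positivity)

lemma hasDerivAt_oneAddRpowSubOne (q x : ℝ) :
    HasDerivAt (oneAddRpowSubOne q) (q * (1 + max x 0) ^ (q - 1)) x :=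
  ((continuous_one_add_max_rpow (q - 1)).const_mul q).integral_hasStrictDerivAt 0 x |>.hasDerivAt

lemma deriv_oneAddRpowSubOne (q : ℝ) :
    deriv (oneAddRpowSubOne q) = fun x => q * (1 + max x 0) ^ (q - 1) :=
  funext fun x => (hasDerivAt_oneAddRpowSubOne q x).deriv

lemma contDiff_oneAddRpowSubOne (q : ℝ) : ContDiff ℝ 1 (oneAddRpowSubOne q) := by
  rw [contDiff_one_iff_deriv, deriv_oneAddRpowSubOne]
  exact ⟨fun x => (hasDerivAt_oneAddRpowSubOne q x).differentiableAt,
    (continuous_one_add_max_rpow (q - 1)).const_mul q⟩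

lemma oneAddRpowSubOne_zero (q : ℝ) : oneAddRpowSubOne q 0 = 0 :=
  intervalIntegral.integral_same

lemma oneAddRpowSubOne_of_nonneg (q : ℝ) {x : ℝ} (hx : 0 ≤ x) :
    oneAddRpowSubOne q x = (1 + x) ^ q - 1 := by
  have hderiv : ∀ y ∈ Set.uIcc 0 x,
      HasDerivAt (fun y => (1 + y) ^ q) (q * (1 + max y 0) ^ (q - 1)) y := by
    intro y hy
    rw [Set.uIcc_of_le hx] at hy
    rw [max_eq_left hy.1]
    simpa using ((hasDerivAt_id y).const_add 1).rpow_const (p := q)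
      (Or.inl (by simp only [id]; linarith [hy.1]))
  have hint := ((continuous_one_add_max_rpow (q - 1)).const_mul q).intervalIntegrable
    (μ := volume) 0 x
  rw [oneAddRpowSubOne, intervalIntegral.integral_eq_sub_of_hasDerivAt hderiv hint]
  simp

lemma deriv_oneAddRpowSubOne_sq {s : ℝ} (hs : 2 * s - 1 ≠ 0) (x : ℝ) :
    deriv (oneAddRpowSubOne s) x ^ 2 =
      deriv (fun x => s ^ 2 / (2 * s - 1) * oneAddRpowSubOne (2 * s - 1) x) x := by
  have hpow : ((1 + max x 0) ^ (s - 1)) ^ 2 = (1 + max x 0) ^ (2 * s - 1 - 1) := by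
    rw [← Real.rpow_mul_natCast (by positivity)]
    push_cast
    ring_nf
  rw [deriv_const_mul_field, deriv_oneAddRpowSubOne, deriv_oneAddRpowSubOne, mul_pow, hpow,
    ← mul_assoc, div_mul_cancel₀ _ hs]

end OneAddRpow

section YoungAbsorption

lemma mul_rpow_sub_le {s p C v : ℝ} (hs : 0 < s) (hsp : s < p) (hC : 0 ≤ C) (hv : 0 ≤ v) :
    C * v ^ (p - s) ≤ (1 - s / p) * v ^ p + s / p * C ^ (p / s) := by
  have hp : 0 < p := hs.trans hsp
  have hexp_v : p * (1 - s / p) = p - s := by field_simp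
  have hexp_C : p / s * (s / p) = 1 := by field_simp
  have amgm := Real.geom_mean_le_arith_mean2_weighted (w₁ := 1 - s / p) (w₂ := s / p)
    (sub_nonneg.2 ((div_le_one hp).2 hsp.le)) (by positivity)
    (Real.rpow_nonneg hv p) (Real.rpow_nonneg hC (p / s)) (by ring)
  rwa [← Real.rpow_mul hv, ← Real.rpow_mul hC, hexp_v, hexp_C, Real.rpow_one, mul_comm] at amgm

lemma integral_mul_rpow_le_of_le_mul {X : Type*} [MeasurableSpace X] {μ : Measure X}
    {w v : X → ℝ} {s p C : ℝ} (hs : 0 < s) (hsp : s < p) (hC : 0 ≤ C)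
    (hw : ∀ᵐ x ∂μ, 0 ≤ w x) (hv : ∀ᵐ x ∂μ, 0 ≤ v x)
    (hw_int : Integrable w μ) (hwv_int : Integrable (fun x => w x * v x ^ p) μ)
    (hle : ∫ x, w x * v x ^ p ∂μ ≤ C * ∫ x, w x * v x ^ (p - s) ∂μ) :
    ∫ x, w x * v x ^ p ∂μ ≤ C ^ (p / s) * ∫ x, w x ∂μ := by
  have hp : 0 < p := hs.trans hsp
  have young : C * ∫ x, w x * v x ^ (p - s) ∂μ ≤
      (1 - s / p) * (∫ x, w x * v x ^ p ∂μ) + s / p * C ^ (p / s) * ∫ x, w x ∂μ := by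
    simp only [← MeasureTheory.integral_const_mul]
    rw [← MeasureTheory.integral_add (hwv_int.const_mul _) (hw_int.const_mul _)]
    refine integral_mono_of_nonneg ?_ ((hwv_int.const_mul _).add (hw_int.const_mul _)) ?_
    · filter_upwards [hw, hv] with x hwx hvx
      simp only [Pi.zero_apply]
      positivity
    · filter_upwards [hw, hv] with x hwx hvx
      linarith [mul_le_mul_of_nonneg_left (mul_rpow_sub_le hs hsp hC hvx) hwx]
  have habsorbed : s / p * ∫ x, w x * v x ^ p ∂μ ≤ s / p * (C ^ (p / s) * ∫ x, w x ∂μ) := by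
    linarith
  exact le_of_mul_le_mul_left habsorbed (by positivity)

end YoungAbsorption

lemma sq_lt_mul_two_mul_sub_one {m s : ℝ} (hlower : m - √(m * (m - 1)) < s)
    (hupper : s < m + √(m * (m - 1))) : s ^ 2 < m * (2 * s - 1) := by
  have habs : |s - m| < √(m * (m - 1)) := abs_lt.2 ⟨by linarith, by linarith⟩
  rw [Real.lt_sqrt (abs_nonneg _), sq_abs] at habs
  linarith

lemma two_mul_sub_one_pos {m s : ℝ} (hm : 0 < m) (hms : s ^ 2 < m * (2 * s - 1)) :
    0 < 2 * s - 1 :=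
  pos_of_mul_pos_right ((sq_nonneg s).trans_lt hms) hm.le

section SemistableSolutions

variable {α β κ lam : ℝ} {w u : ℝ → ℝ}

lemma semistable_test_le_weak_test {g f F G : ℝ → ℝ} (hu : ContDiff ℝ 1 u) (huβ : u β = 0)
    (hF : ContDiff ℝ 1 F) (hF0 : F 0 = 0) (hG : ContDiff ℝ 1 G) (hG0 : G 0 = 0)
    (hFG : ∀ x, deriv F x ^ 2 = deriv G x)
    (hstab : ∀ ξ : ℝ → ℝ, ContDiff ℝ 1 ξ → ξ β = 0 →
      κ * ∫ r in α..β, w r * g r * ξ r ^ 2 ≤ ∫ r in α..β, w r * deriv ξ r ^ 2)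
    (hweak : ∀ φ : ℝ → ℝ, ContDiff ℝ 1 φ → φ β = 0 →
      ∫ r in α..β, w r * deriv u r * deriv φ r = lam * ∫ r in α..β, w r * f r * φ r) :
    κ * ∫ r in α..β, w r * g r * F (u r) ^ 2 ≤ lam * ∫ r in α..β, w r * f r * G (u r) := by
  have hchain : ∀ {H : ℝ → ℝ}, ContDiff ℝ 1 H → ∀ r,
      deriv (fun r => H (u r)) r = deriv H (u r) * deriv u r := fun hH r =>
    deriv_comp r (hH.differentiable one_ne_zero _) (hu.differentiable one_ne_zero _)
  calc κ * ∫ r in α..β, w r * g r * F (u r) ^ 2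
      ≤ ∫ r in α..β, w r * deriv (fun r => F (u r)) r ^ 2 :=
        hstab _ (hF.comp hu) (by rw [huβ, hF0])
    _ = ∫ r in α..β, w r * deriv u r * deriv (fun r => G (u r)) r := by
        refine intervalIntegral.integral_congr fun r _ => ?_
        simp only [hchain hF, hchain hG, ← hFG]
        ring
    _ = lam * ∫ r in α..β, w r * f r * G (u r) :=
        hweak _ (hG.comp hu) (by rw [huβ, hG0])

lemma intervalIntegrable_mul_one_add_rpow (hαβ : α ≤ β) (hw_int : IntervalIntegrable w volume α β)
    (hu : ContinuousOn u (Set.Icc α β)) (hu0 : ∀ r ∈ Set.Icc α β, 0 ≤ u r) (q : ℝ) :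
    IntervalIntegrable (fun r => w r * (1 + u r) ^ q) volume α β := by
  refine hw_int.mul_continuousOn ?_
  rw [Set.uIcc_of_le hαβ]
  exact ContinuousOn.rpow_const (by fun_prop) fun r hr => Or.inl (by linarith [hu0 r hr])

lemma one_add_rpow_sub_two_mul_le (m s : ℝ) {x : ℝ} (hx : 0 ≤ x) :
    (1 + x) ^ (2 * s + m - 1) - 2 * (1 + x) ^ (2 * s + m - 1 - s) ≤
      (1 + x) ^ (m - 1) * oneAddRpowSubOne s x ^ 2 := by
  have hpos : 0 < 1 + x := by linarith
  have hsq : (1 + x) ^ (2 * s + m - 1) = (1 + x) ^ (m - 1) * ((1 + x) ^ s * (1 + x) ^ s) := by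
    rw [← Real.rpow_add hpos, ← Real.rpow_add hpos]
    ring_nf
  have hcross : (1 + x) ^ (2 * s + m - 1 - s) = (1 + x) ^ (m - 1) * (1 + x) ^ s := by
    rw [← Real.rpow_add hpos]
    ring_nf
  rw [oneAddRpowSubOne_of_nonneg s hx, hsq, hcross]
  linarith [Real.rpow_nonneg hpos.le (m - 1)]

lemma one_add_rpow_mul_oneAddRpowSubOne_le (m s : ℝ) {x : ℝ} (hx : 0 ≤ x) :
    (1 + x) ^ m * oneAddRpowSubOne (2 * s - 1) x ≤ (1 + x) ^ (2 * s + m - 1) := by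
  have hpos : 0 < 1 + x := by linarith
  have hmul : (1 + x) ^ (2 * s + m - 1) = (1 + x) ^ m * (1 + x) ^ (2 * s - 1) := by
    rw [← Real.rpow_add hpos]
    ring_nf
  rw [oneAddRpowSubOne_of_nonneg _ hx, hmul]
  linarith [Real.rpow_nonneg hpos.le m]

lemma integral_rpow_sub_two_mul_le_integral_test_sq (m s : ℝ) (hαβ : α ≤ β)
    (hw : ∀ r ∈ Set.Icc α β, 0 ≤ w r) (hw_int : IntervalIntegrable w volume α β)
    (hu : Continuous u) (hu0 : ∀ r ∈ Set.Icc α β, 0 ≤ u r) :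
    (∫ r in α..β, w r * (1 + u r) ^ (2 * s + m - 1)) -
        2 * ∫ r in α..β, w r * (1 + u r) ^ (2 * s + m - 1 - s) ≤
      ∫ r in α..β, w r * (1 + u r) ^ (m - 1) * oneAddRpowSubOne s (u r) ^ 2 := by
  have hpow_int := intervalIntegrable_mul_one_add_rpow hαβ hw_int hu.continuousOn hu0
  have htest_cont : Continuous fun r => oneAddRpowSubOne s (u r) :=
    (contDiff_oneAddRpowSubOne s).continuous.comp hu
  rw [← intervalIntegral.integral_const_mul,
    ← intervalIntegral.integral_sub (hpow_int _) ((hpow_int _).const_mul 2)]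
  refine intervalIntegral.integral_mono_on hαβ ((hpow_int _).sub ((hpow_int _).const_mul 2))
    ((hpow_int _).mul_continuousOn (htest_cont.pow 2).continuousOn) fun r hr => ?_
  linarith [mul_le_mul_of_nonneg_left (one_add_rpow_sub_two_mul_le m s (hu0 r hr)) (hw r hr)]

lemma integral_test_le_integral_rpow (m s : ℝ) (hαβ : α ≤ β)
    (hw : ∀ r ∈ Set.Icc α β, 0 ≤ w r) (hw_int : IntervalIntegrable w volume α β)
    (hu : Continuous u) (hu0 : ∀ r ∈ Set.Icc α β, 0 ≤ u r) :
    ∫ r in α..β, w r * (1 + u r) ^ m * oneAddRpowSubOne (2 * s - 1) (u r) ≤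
      ∫ r in α..β, w r * (1 + u r) ^ (2 * s + m - 1) := by
  have hpow_int := intervalIntegrable_mul_one_add_rpow hαβ hw_int hu.continuousOn hu0
  have htest_cont : Continuous fun r => oneAddRpowSubOne (2 * s - 1) (u r) :=
    (contDiff_oneAddRpowSubOne _).continuous.comp hu
  refine intervalIntegral.integral_mono_on hαβ
    ((hpow_int m).mul_continuousOn htest_cont.continuousOn) (hpow_int _) fun r hr => ?_
  rw [mul_assoc]
  exact mul_le_mul_of_nonneg_left (one_add_rpow_mul_oneAddRpowSubOne_le m s (hu0 r hr)) (hw r hr)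

variable {m s : ℝ}

lemma integral_rpow_le_mul_integral_rpow_of_semistable (hαβ : α ≤ β)
    (hw : ∀ r ∈ Set.Icc α β, 0 ≤ w r) (hw_int : IntervalIntegrable w volume α β)
    (hlam : 0 < lam) (hm : 0 < m) (hms : s ^ 2 < m * (2 * s - 1))
    (hu : ContDiff ℝ 1 u) (hu0 : ∀ r ∈ Set.Icc α β, 0 ≤ u r) (huβ : u β = 0)
    (hstab : ∀ ξ : ℝ → ℝ, ContDiff ℝ 1 ξ → ξ β = 0 →
      lam * m * ∫ r in α..β, w r * (1 + u r) ^ (m - 1) * ξ r ^ 2 ≤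
        ∫ r in α..β, w r * deriv ξ r ^ 2)
    (hweak : ∀ φ : ℝ → ℝ, ContDiff ℝ 1 φ → φ β = 0 →
      ∫ r in α..β, w r * deriv u r * deriv φ r =
        lam * ∫ r in α..β, w r * (1 + u r) ^ m * φ r) :
    ∫ r in α..β, w r * (1 + u r) ^ (2 * s + m - 1) ≤
      2 * m * (2 * s - 1) / (m * (2 * s - 1) - s ^ 2) *
        ∫ r in α..β, w r * (1 + u r) ^ (2 * s + m - 1 - s) := by
  have hs := two_mul_sub_one_pos hm hms
  set P := ∫ r in α..β, w r * (1 + u r) ^ (2 * s + m - 1)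
  set Q := ∫ r in α..β, w r * (1 + u r) ^ (2 * s + m - 1 - s)
  have htested := semistable_test_le_weak_test hu huβ (contDiff_oneAddRpowSubOne s)
    (oneAddRpowSubOne_zero s) (contDiff_const.mul (contDiff_oneAddRpowSubOne (2 * s - 1)))
    (by rw [oneAddRpowSubOne_zero, mul_zero]) (deriv_oneAddRpowSubOne_sq hs.ne') hstab hweak
  simp only [mul_left_comm _ (s ^ 2 / (2 * s - 1)), intervalIntegral.integral_const_mul] at htested
  have hcompare : lam * (m * (P - 2 * Q)) ≤ lam * (s ^ 2 / (2 * s - 1) * P) := by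
    calc lam * (m * (P - 2 * Q)) = lam * m * (P - 2 * Q) := (mul_assoc _ _ _).symm
      _ ≤ lam * m *
          ∫ r in α..β, w r * (1 + u r) ^ (m - 1) * oneAddRpowSubOne s (u r) ^ 2 := by
        gcongr
        exact integral_rpow_sub_two_mul_le_integral_test_sq m s hαβ hw hw_int hu.continuous hu0
      _ ≤ s ^ 2 / (2 * s - 1) * (lam *
          ∫ r in α..β, w r * (1 + u r) ^ m * oneAddRpowSubOne (2 * s - 1) (u r)) := htested
      _ ≤ s ^ 2 / (2 * s - 1) * (lam * P) := by
        gcongr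
        exact integral_test_le_integral_rpow m s hαβ hw hw_int hu.continuous hu0
      _ = lam * (s ^ 2 / (2 * s - 1) * P) := mul_left_comm _ _ _
  have hcleared := le_of_mul_le_mul_left hcompare hlam
  rw [div_mul_eq_mul_div, le_div_iff₀ hs] at hcleared
  rw [div_mul_eq_mul_div, le_div_iff₀ (sub_pos.2 hms)]
  linarith

theorem radial_power_uniform_estimate_general (hαβ : α ≤ β)
    (hw : ∀ r ∈ Set.Icc α β, 0 ≤ w r) (hw_int : IntervalIntegrable w volume α β)
    (hlam : 0 < lam) (hm : 0 < m) (hms : s ^ 2 < m * (2 * s - 1))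
    (hu : ContDiff ℝ 1 u) (hu0 : ∀ r ∈ Set.Icc α β, 0 ≤ u r) (huβ : u β = 0)
    (hstab : ∀ ξ : ℝ → ℝ, ContDiff ℝ 1 ξ → ξ β = 0 →
      lam * m * ∫ r in α..β, w r * (1 + u r) ^ (m - 1) * ξ r ^ 2 ≤
        ∫ r in α..β, w r * deriv ξ r ^ 2)
    (hweak : ∀ φ : ℝ → ℝ, ContDiff ℝ 1 φ → φ β = 0 →
      ∫ r in α..β, w r * deriv u r * deriv φ r =
        lam * ∫ r in α..β, w r * (1 + u r) ^ m * φ r) :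
    ∫ r in α..β, w r * (1 + u r) ^ (2 * s + m - 1) ≤
      (2 * m * (2 * s - 1) / (m * (2 * s - 1) - s ^ 2)) ^ ((2 * s + m - 1) / s) *
        ∫ r in α..β, w r := by
  have hs := two_mul_sub_one_pos hm hms
  have one_lt_m : 1 < m := by nlinarith [sq_nonneg (s - 1)]
  have hreverse := integral_rpow_le_mul_integral_rpow_of_semistable hαβ hw hw_int hlam hm hms
    hu hu0 huβ hstab hweak
  have hpow_int := intervalIntegrable_mul_one_add_rpow hαβ hw_int hu.continuous.continuousOn hu0
    (2 * s + m - 1)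
  have ae_of_Icc : ∀ {P : ℝ → Prop}, (∀ r ∈ Set.Icc α β, P r) →
      ∀ᵐ r ∂volume.restrict (Set.Ioc α β), P r := fun h =>
    ae_restrict_of_forall_mem measurableSet_Ioc fun r hr => h r (Set.Ioc_subset_Icc_self hr)
  simp only [intervalIntegral.integral_of_le hαβ] at hreverse ⊢
  exact integral_mul_rpow_le_of_le_mul (by linarith) (by linarith)
    (div_nonneg (by positivity) (sub_pos.2 hms).le) (ae_of_Icc hw)
    (ae_of_Icc fun r hr => by linarith [hu0 r hr]) hw_int.1 hpow_int.1 hreverse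

end SemistableSolutions

theorem radial_power_uniform_estimate
    (N : ℕ) (hN : 1 ≤ N) (R : ℝ) (hR : 0 < R)
    (a ψ : ℝ → ℝ) (ha : ContinuousOn a (Set.Icc 0 R))
    (hψ : ContinuousOn ψ (Set.Icc 0 R)) (hψ0 : ∀ r ∈ Set.Icc (0:ℝ) R, 0 ≤ ψ r)
    (w : ℝ → ℝ) (hw : ∀ r, w r = exp (a r) * ψ r ^ (N - 1))
    (lam m b t : ℝ) (hlam : 0 < lam) (hm : 1 < m) (hb : 0 < b) (ht : 0 < t)
    (hbt1 : m - Real.sqrt (m*(m-1)) < b*t) (hbt2 : b*t < m + Real.sqrt (m*(m-1)))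
    (u : ℝ → ℝ) (hu : ContDiff ℝ 1 u)
    (hu0 : ∀ r ∈ Set.Icc (0:ℝ) R, 0 ≤ u r) (huR : u R = 0)
    (hstab : ∀ ξ : ℝ → ℝ, ContDiff ℝ 1 ξ → ξ R = 0 →
      ∫ r in (0:ℝ)..R, w r * (deriv ξ r)^2 ≥
        lam * m * ∫ r in (0:ℝ)..R, w r * (1 + u r) ^ (m-1) * (ξ r)^2)
    (hweak : ∀ φ : ℝ → ℝ, ContDiff ℝ 1 φ → φ R = 0 →
      ∫ r in (0:ℝ)..R, w r * deriv u r * deriv φ r =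
        lam * ∫ r in (0:ℝ)..R, w r * (1 + u r) ^ m * φ r) :
    ∫ r in (0:ℝ)..R, w r * (1 + u r) ^ (2*b*t + m - 1) ≤
      (2*m*(2*b*t - 1)/(m*(2*b*t - 1) - b^2*t^2)) ^ ((2*b*t + m - 1)/(b*t)) *
        ∫ r in (0:ℝ)..R, w r := by
  have hw_cont : ContinuousOn w (Set.Icc 0 R) := by
    rw [funext hw]
    fun_prop
  have hw_nonneg : ∀ r ∈ Set.Icc 0 R, 0 ≤ w r := fun r hr => by
    have := hψ0 r hr
    rw [hw]
    positivity
  simpa only [mul_assoc, mul_pow] using radial_power_uniform_estimate_general hR.le hw_nonneg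
    (hw_cont.intervalIntegrable_of_Icc hR.le) hlam (by linarith)
    (sq_lt_mul_two_mul_sub_one hbt1 hbt2) hu hu0 huR hstab hweak
end

section
/- Let N ≥ 1 be an integer, R > 0, let a : [0,R] → ℝ be continuous and ψ : [0,R] → ℝ be continuous, nonnegative, and strictly positive on (0,R), and write w(r) = e^{a(r)}ψ(r)^{N−1}. Let λ > 0 and let u : [0,R] → ℝ be continuously differentiable with 0 ≤ u(r) < 1 for all r ∈ [0,R] and u'(r) ≤ 0 for all r, and assume that for every r ∈ (0,R), e^{a(r)}ψ(r)^{N−1}u'(r) = −λ∫₀^r w(s)(1−u(s))^{−2} ds. Then for every p > 1 and every r ∈ (0,R): u(0) ≥ u(r), and there exists c ∈ (0,r) such that u(0) − u(r) ≤ λ r e^{−a(c)}ψ(c)^{1−N} (∫₀^R w(s)(1−u(s))^{−2p} ds)^{1/p} (∫₀^R w(s) ds)^{(p−1)/p}. -/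
open MeasureTheory Real intervalIntegral

/-!
By the mean value theorem `u 0 - u r = -r * u' c` for some `c` between `0` and `r`, and the
integrated equation expresses `-w c * u' c` as `lam` times the integral over `(0, c)` of the
source `(1 - u)⁻²` against the weight `w`. That integral only grows when `(0, c)` is enlarged to
`(0, R)`, where Hölder's inequality for the measure `w ds`, applied to the source and the constant
`1`, finishes the proof.
-/

section Holder

variable {α : Type*} [MeasurableSpace α] {μ : Measure α} {f g : α → ℝ} {p q : ℝ}

theorem memLp_rpow_inv_of_integrable (hp : 0 < p) (hf0 : 0 ≤ᵐ[μ] f) (hf : Integrable f μ) :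
    MemLp (fun x ↦ f x ^ p⁻¹) (ENNReal.ofReal p) μ := by
  have hmeas : AEStronglyMeasurable (fun x ↦ f x ^ p⁻¹) μ :=
    (hf.aemeasurable.pow_const _).aestronglyMeasurable
  rw [← integrable_norm_rpow_iff hmeas (by simpa using hp) ENNReal.ofReal_ne_top,
    ENNReal.toReal_ofReal hp.le]
  refine hf.congr ?_
  filter_upwards [hf0] with x hx
  rw [norm_of_nonneg (rpow_nonneg hx _), rpow_inv_rpow hx hp.ne']

theorem integral_rpow_inv_mul_rpow_inv_le (hpq : p.HolderConjugate q)
    (hf0 : 0 ≤ᵐ[μ] f) (hg0 : 0 ≤ᵐ[μ] g) (hf : Integrable f μ) (hg : Integrable g μ) :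
    ∫ x, f x ^ p⁻¹ * g x ^ q⁻¹ ∂μ ≤ (∫ x, f x ∂μ) ^ (1 / p) * (∫ x, g x ∂μ) ^ (1 / q) := by
  have rpow_inv_rpow_ae {h : α → ℝ} {s : ℝ} (hs : 0 < s) (h0 : 0 ≤ᵐ[μ] h) :
      (fun x ↦ (h x ^ s⁻¹) ^ s) =ᵐ[μ] h := by
    filter_upwards [h0] with x hx using rpow_inv_rpow hx hs.ne'
  rw [← integral_congr_ae (rpow_inv_rpow_ae hpq.pos hf0),
    ← integral_congr_ae (rpow_inv_rpow_ae hpq.symm.pos hg0)]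
  exact integral_mul_le_Lp_mul_Lq_of_nonneg hpq
    (hf0.mono fun _ hx ↦ rpow_nonneg hx _) (hg0.mono fun _ hx ↦ rpow_nonneg hx _)
    (memLp_rpow_inv_of_integrable hpq.pos hf0 hf)
    (memLp_rpow_inv_of_integrable hpq.symm.pos hg0 hg)

theorem integral_weight_mul_le {w : α → ℝ} (hpq : p.HolderConjugate q)
    (hw0 : 0 ≤ᵐ[μ] w) (hf0 : 0 ≤ᵐ[μ] f) (hw : Integrable w μ)
    (hwf : Integrable (fun x ↦ w x * f x ^ p) μ) :
    ∫ x, w x * f x ∂μ ≤ (∫ x, w x * f x ^ p ∂μ) ^ (1 / p) * (∫ x, w x ∂μ) ^ (1 / q) := by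
  have hwf0 : 0 ≤ᵐ[μ] fun x ↦ w x * f x ^ p := by
    filter_upwards [hw0, hf0] with x hwx hfx using mul_nonneg hwx (rpow_nonneg hfx _)
  have hsplit : (fun x ↦ (w x * f x ^ p) ^ p⁻¹ * w x ^ q⁻¹) =ᵐ[μ] fun x ↦ w x * f x := by
    filter_upwards [hw0, hf0] with x hwx hfx
    calc (w x * f x ^ p) ^ p⁻¹ * w x ^ q⁻¹
        = w x ^ p⁻¹ * w x ^ q⁻¹ * f x := by
          rw [mul_rpow hwx (rpow_nonneg hfx _), rpow_rpow_inv hfx hpq.ne_zero]; ring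
      _ = w x * f x := by
          rw [← rpow_add_of_nonneg hwx hpq.inv_nonneg hpq.symm.inv_nonneg,
            hpq.inv_add_inv_eq_one, rpow_one]
  rw [← integral_congr_ae hsplit]
  exact integral_rpow_inv_mul_rpow_inv_le hpq hwf0 hw0 hwf hw

end Holder

section Interval

variable {a b : ℝ}

theorem intervalIntegral_weight_mul_le {w f : ℝ → ℝ} {p q c : ℝ} (hpq : p.HolderConjugate q)
    (hw : ContinuousOn w (Set.Icc a b)) (hf : ContinuousOn f (Set.Icc a b))
    (hw0 : ∀ x ∈ Set.Ioo a b, 0 ≤ w x) (hf0 : ∀ x ∈ Set.Ioo a b, 0 ≤ f x)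
    (hc : c ∈ Set.Icc a b) :
    ∫ x in a..c, w x * f x ≤
      (∫ x in a..b, w x * f x ^ p) ^ (1 / p) * (∫ x in a..b, w x) ^ (1 / q) := by
  have hab : a ≤ b := hc.1.trans hc.2
  have ae_nonneg {h : ℝ → ℝ} (h0 : ∀ x ∈ Set.Ioo a b, 0 ≤ h x) :
      0 ≤ᵐ[volume.restrict (Set.Ioc a b)] h := by
    rw [← restrict_Ioo_eq_restrict_Ioc]
    exact ae_restrict_of_forall_mem measurableSet_Ioo h0
  have integrableOn {h : ℝ → ℝ} (h' : ContinuousOn h (Set.Icc a b)) :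
      IntegrableOn h (Set.Ioc a b) :=
    h'.integrableOn_Icc.mono_set Set.Ioc_subset_Icc_self
  have hfp : ContinuousOn (fun x ↦ f x ^ p) (Set.Icc a b) :=
    hf.rpow_const fun _ _ ↦ Or.inr hpq.nonneg
  calc ∫ x in a..c, w x * f x
      ≤ ∫ x in a..b, w x * f x :=
        integral_mono_interval le_rfl hc.1 hc.2
          (ae_nonneg fun x hx ↦ mul_nonneg (hw0 x hx) (hf0 x hx))
          ((hw.mul hf).intervalIntegrable_of_Icc hab)
    _ ≤ (∫ x in a..b, w x * f x ^ p) ^ (1 / p) * (∫ x in a..b, w x) ^ (1 / q) := by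
        simp only [integral_of_le hab]
        exact integral_weight_mul_le hpq (ae_nonneg hw0) (ae_nonneg hf0) (integrableOn hw)
          (integrableOn (hw.mul hfp))

theorem exists_sub_eq_mul_integral_of_mul_deriv_eq {u w f : ℝ → ℝ} {lam : ℝ} (hab : a < b)
    (hu : ContinuousOn u (Set.Icc a b)) (hu' : DifferentiableOn ℝ u (Set.Ioo a b))
    (hw : ∀ x ∈ Set.Ioo a b, w x ≠ 0)
    (hflux : ∀ x ∈ Set.Ioo a b, w x * deriv u x = -lam * ∫ s in a..x, f s) :
    ∃ c ∈ Set.Ioo a b, u a - u b = lam * (b - a) * (w c)⁻¹ * ∫ s in a..c, f s := by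
  obtain ⟨c, hc, hslope⟩ := exists_deriv_eq_slope u hab hu hu'
  refine ⟨c, hc, ?_⟩
  have hwc : w c ≠ 0 := hw c hc
  have hdiff : u b - u a = deriv u c * (b - a) := by
    rw [hslope, div_mul_cancel₀ _ (sub_pos.2 hab).ne']
  have hderiv : deriv u c = -lam * (w c)⁻¹ * ∫ s in a..c, f s := by
    rw [mul_right_comm, ← hflux c hc, mul_right_comm, mul_inv_cancel₀ hwc, one_mul]
  linear_combination -hdiff - (b - a) * hderiv

theorem le_and_exists_sub_le_of_mul_deriv_eq_integral {u w f : ℝ → ℝ} {lam p q r : ℝ}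
    (hpq : p.HolderConjugate q) (hlam : 0 ≤ lam)
    (hu : ContinuousOn u (Set.Icc a b)) (hu' : DifferentiableOn ℝ u (Set.Ioo a b))
    (hw : ContinuousOn w (Set.Icc a b)) (hf : ContinuousOn f (Set.Icc a b))
    (hwpos : ∀ x ∈ Set.Ioo a b, 0 < w x) (hf0 : ∀ x ∈ Set.Ioo a b, 0 ≤ f x)
    (hflux : ∀ x ∈ Set.Ioo a b, w x * deriv u x = -lam * ∫ s in a..x, w s * f s)
    (hr : r ∈ Set.Ioc a b) :
    u r ≤ u a ∧ ∃ c ∈ Set.Ioo a r, u a - u r ≤ lam * (r - a) * (w c)⁻¹ *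
      ((∫ s in a..b, w s * f s ^ p) ^ (1 / p) * (∫ s in a..b, w s) ^ (1 / q)) := by
  have hsub : Set.Ioo a r ⊆ Set.Ioo a b := Set.Ioo_subset_Ioo_right hr.2
  obtain ⟨c, hc, hdiff⟩ := exists_sub_eq_mul_integral_of_mul_deriv_eq hr.1
    (hu.mono (Set.Icc_subset_Icc_right hr.2)) (hu'.mono hsub)
    (fun s hs ↦ (hwpos s (hsub hs)).ne') (fun s hs ↦ hflux s (hsub hs))
  have hcoeff : 0 ≤ lam * (r - a) * (w c)⁻¹ :=
    mul_nonneg (mul_nonneg hlam (sub_pos.2 hr.1).le) (inv_nonneg.2 (hwpos c (hsub hc)).le)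
  have hint : 0 ≤ ∫ s in a..c, w s * f s := by
    rw [integral_of_le hc.1.le]
    refine setIntegral_nonneg measurableSet_Ioc fun s hs ↦ ?_
    have hs' : s ∈ Set.Ioo a b := ⟨hs.1, hs.2.trans_lt (hsub hc).2⟩
    exact mul_nonneg (hwpos s hs').le (hf0 s hs')
  refine ⟨sub_nonneg.1 (hdiff ▸ mul_nonneg hcoeff hint), c, hc, ?_⟩
  rw [hdiff]
  exact mul_le_mul_of_nonneg_left (intervalIntegral_weight_mul_le hpq hw hf
    (fun s hs ↦ (hwpos s hs).le) hf0 (Set.Ioo_subset_Icc_self (hsub hc))) hcoeff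

end Interval

theorem inv_exp_mul_pow_sub_one (x y : ℝ) {N : ℕ} (hN : 1 ≤ N) :
    (exp x * y ^ (N - 1))⁻¹ = exp (-x) * y ^ ((1 : ℤ) - (N : ℤ)) := by
  rw [mul_inv, exp_neg, ← zpow_natCast, ← zpow_neg, Nat.cast_sub hN, Nat.cast_one, neg_sub]

theorem radial_mems_oscillation_bound_general {N : ℕ} (hN : 1 ≤ N) {R : ℝ} {a ψ w u : ℝ → ℝ}
    (ha : ContinuousOn a (Set.Icc 0 R)) (hψ : ContinuousOn ψ (Set.Icc 0 R))
    (hψpos : ∀ r ∈ Set.Ioo 0 R, 0 < ψ r) (hw : ∀ r, w r = exp (a r) * ψ r ^ (N - 1))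
    {lam : ℝ} (hlam : 0 ≤ lam)
    (hu : ContinuousOn u (Set.Icc 0 R)) (hu' : DifferentiableOn ℝ u (Set.Ioo 0 R))
    (hu1 : ∀ r ∈ Set.Icc 0 R, u r < 1)
    (hflux : ∀ r ∈ Set.Ioo 0 R,
      w r * deriv u r = -lam * ∫ s in (0 : ℝ)..r, w s * (1 - u s) ^ (-(2 : ℝ)))
    {p : ℝ} (hp : 1 < p) {r : ℝ} (hr : r ∈ Set.Ioo 0 R) :
    u r ≤ u 0 ∧ ∃ c ∈ Set.Ioo 0 r,
      u 0 - u r ≤ lam * r * exp (-(a c)) * ψ c ^ ((1 : ℤ) - (N : ℤ)) *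
        (∫ s in (0 : ℝ)..R, w s * (1 - u s) ^ (-(2 * p))) ^ (1 / p) *
        (∫ s in (0 : ℝ)..R, w s) ^ ((p - 1) / p) := by
  have hgap : ∀ s ∈ Set.Icc 0 R, 0 < 1 - u s := fun s hs ↦ sub_pos.2 (hu1 s hs)
  have hwcont : ContinuousOn w (Set.Icc 0 R) := funext hw ▸ ha.rexp.mul (hψ.pow _)
  have hwpos : ∀ s ∈ Set.Ioo 0 R, 0 < w s := fun s hs ↦
    hw s ▸ mul_pos (exp_pos _) (pow_pos (hψpos s hs) _)
  have hsource : ContinuousOn (fun s ↦ (1 - u s) ^ (-(2 : ℝ))) (Set.Icc 0 R) :=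
    (continuousOn_const.sub hu).rpow_const fun s hs ↦ Or.inl (hgap s hs).ne'
  have hsource_nonneg : ∀ s ∈ Set.Ioo 0 R, 0 ≤ (1 - u s) ^ (-(2 : ℝ)) := fun s hs ↦
    rpow_nonneg (hgap s (Set.Ioo_subset_Icc_self hs)).le _
  have hsource_rpow : ∫ s in (0 : ℝ)..R, w s * ((1 - u s) ^ (-(2 : ℝ))) ^ p =
      ∫ s in (0 : ℝ)..R, w s * (1 - u s) ^ (-(2 * p)) := by
    refine integral_congr fun s hs ↦ ?_
    rw [Set.uIcc_of_le (hr.1.trans hr.2).le] at hs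
    simp only [← rpow_mul (hgap s hs).le, neg_mul]
  obtain ⟨hle, c, hc, hbound⟩ := le_and_exists_sub_le_of_mul_deriv_eq_integral
    (HolderConjugate.conjExponent hp) hlam hu hu' hwcont hsource hwpos hsource_nonneg hflux
    (Set.Ioo_subset_Ioc_self hr)
  refine ⟨hle, c, hc, ?_⟩
  rw [hsource_rpow, hw c, inv_exp_mul_pow_sub_one _ _ hN, conjExponent, one_div_div,
    sub_zero] at hbound
  simpa only [mul_assoc] using hbound

theorem radial_mems_oscillation_bound
    (N : ℕ) (hN : 1 ≤ N) (R : ℝ) (hR : 0 < R)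
    (a ψ : ℝ → ℝ) (ha : ContinuousOn a (Set.Icc 0 R))
    (hψ : ContinuousOn ψ (Set.Icc 0 R)) (hψ0 : ∀ r ∈ Set.Icc (0:ℝ) R, 0 ≤ ψ r)
    (hψpos : ∀ r ∈ Set.Ioo (0:ℝ) R, 0 < ψ r)
    (w : ℝ → ℝ) (hw : ∀ r, w r = exp (a r) * ψ r ^ (N - 1))
    (lam : ℝ) (hlam : 0 < lam)
    (u : ℝ → ℝ) (hu : ContDiff ℝ 1 u)
    (hu01 : ∀ r ∈ Set.Icc (0:ℝ) R, 0 ≤ u r ∧ u r < 1)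
    (hu' : ∀ r ∈ Set.Icc (0:ℝ) R, deriv u r ≤ 0)
    (heq : ∀ r ∈ Set.Ioo (0:ℝ) R,
      exp (a r) * ψ r ^ (N - 1) * deriv u r =
        -lam * ∫ s in (0:ℝ)..r, w s * (1 - u s) ^ (-(2:ℝ))) :
    ∀ p : ℝ, 1 < p → ∀ r ∈ Set.Ioo (0:ℝ) R,
      u r ≤ u 0 ∧ ∃ c ∈ Set.Ioo (0:ℝ) r,
        u 0 - u r ≤ lam * r * exp (-(a c)) * ψ c ^ ((1:ℤ) - (N:ℤ)) *
          (∫ s in (0:ℝ)..R, w s * (1 - u s) ^ (-(2*p))) ^ (1/p) *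
          (∫ s in (0:ℝ)..R, w s) ^ ((p-1)/p) := by
  intro p hp r hr
  exact radial_mems_oscillation_bound_general hN ha hψ hψpos hw hlam.le
    hu.continuous.continuousOn (hu.differentiable one_ne_zero).differentiableOn
    (fun s hs ↦ (hu01 s hs).2) (fun s hs ↦ hw s ▸ heq s hs) hp hr
end

section
/- Let N ≥ 1 be an integer, R > 0, let a : [0,R] → ℝ be continuous and ψ : [0,R] → ℝ be continuous, nonnegative, and strictly positive on (0,R), and write w(r) = e^{a(r)}ψ(r)^{N−1}. Let λ > 0, m > 1, and let u : [0,R] → ℝ be continuously differentiable with u ≥ 0 and u'(r) ≤ 0 for all r, and assume that for every r ∈ (0,R), e^{a(r)}ψ(r)^{N−1}u'(r) = −λ∫₀^r w(s)(1+u(s))^m ds. Then for every p > 1 and every r ∈ (0,R): u(0) ≥ u(r), and there exists c ∈ (0,r) such that u(0) − u(r) ≤ λ r e^{−a(c)}ψ(c)^{1−N} (∫₀^R w(s)(1+u(s))^{mp} ds)^{1/p} (∫₀^R w(s) ds)^{(p−1)/p}. -/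
open MeasureTheory Real intervalIntegral

/-!
By the mean value theorem `u 0 - u r = -r u'(c)` for some `c ∈ (0, r)`, and the integrated equation
turns `-u'(c)` into `lam * w(c)⁻¹ * ∫₀ᶜ w (1 + u) ^ m`. The integrand is nonnegative, so the
difference is nonnegative and the integral may be extended to `[0, R]`. Hölder's inequality for the
measure `w ds`, applied to the product of `(1 + u) ^ m` and `1`, then gives the bound.
-/

section WeightedHolder

variable {p q : ℝ}

theorem rpow_one_div_mul_rpow {x y : ℝ} (hp : p ≠ 0) (hx : 0 ≤ x) (hy : 0 ≤ y) :
    (x ^ (1 / p) * y) ^ p = x * y ^ p := by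
  rw [mul_rpow (rpow_nonneg hx _) hy, ← rpow_mul hx, one_div_mul_cancel hp, rpow_one]

theorem rpow_one_div_mul_rpow_one_div {x : ℝ} (hpq : p.HolderConjugate q) (hx : 0 ≤ x) :
    x ^ (1 / p) * x ^ (1 / q) = x := by
  rw [← rpow_add_of_nonneg hx hpq.one_div_nonneg hpq.symm.one_div_nonneg, one_div, one_div,
    hpq.inv_add_inv_eq_one, rpow_one]

theorem memLp_ofReal_of_integrable_rpow {α : Type*} [MeasurableSpace α] {μ : Measure α}
    {f : α → ℝ} (hp : 0 < p) (hf : AEStronglyMeasurable f μ) (hf_nonneg : 0 ≤ᵐ[μ] f)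
    (hint : Integrable (fun x ↦ f x ^ p) μ) : MemLp f (ENNReal.ofReal p) μ := by
  rw [← integrable_norm_rpow_iff hf (by simpa using hp) ENNReal.ofReal_ne_top,
    ENNReal.toReal_ofReal hp.le]
  refine hint.congr ?_
  filter_upwards [hf_nonneg] with x hx
  rw [norm_of_nonneg hx]

theorem integral_weight_mul_le_rpow_mul_rpow {α : Type*} [MeasurableSpace α] {μ : Measure α}
    {w g : α → ℝ} (hpq : p.HolderConjugate q) (hw : Integrable w μ)
    (hg : AEStronglyMeasurable g μ) (hw_nonneg : 0 ≤ᵐ[μ] w) (hg_nonneg : 0 ≤ᵐ[μ] g)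
    (hwg : Integrable (fun x ↦ w x * g x ^ p) μ) :
    ∫ x, w x * g x ∂μ ≤ (∫ x, w x * g x ^ p ∂μ) ^ (1 / p) * (∫ x, w x ∂μ) ^ (1 / q) := by
  have root_meas (k : ℝ) : AEStronglyMeasurable (fun x ↦ w x ^ k) μ :=
    (hw.aemeasurable.pow_const k).aestronglyMeasurable
  have root_nonneg (k : ℝ) : 0 ≤ᵐ[μ] fun x ↦ w x ^ k := by
    filter_upwards [hw_nonneg] with x hx using rpow_nonneg hx k
  have prod_nonneg : 0 ≤ᵐ[μ] fun x ↦ w x ^ (1 / p) * g x := by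
    filter_upwards [root_nonneg (1 / p), hg_nonneg] with x hwx hgx using mul_nonneg hwx hgx
  have prod_pow : (fun x ↦ (w x ^ (1 / p) * g x) ^ p) =ᵐ[μ] fun x ↦ w x * g x ^ p := by
    filter_upwards [hw_nonneg, hg_nonneg] with x hwx hgx
      using rpow_one_div_mul_rpow hpq.ne_zero hwx hgx
  have root_pow : (fun x ↦ (w x ^ (1 / q)) ^ q) =ᵐ[μ] w := by
    filter_upwards [hw_nonneg] with x hwx
    rw [← rpow_mul hwx, one_div_mul_cancel hpq.symm.ne_zero, rpow_one]
  have split : (fun x ↦ w x ^ (1 / p) * g x * w x ^ (1 / q)) =ᵐ[μ] fun x ↦ w x * g x := by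
    filter_upwards [hw_nonneg] with x hwx
    rw [mul_right_comm, rpow_one_div_mul_rpow_one_div hpq hwx]
  have holder := integral_mul_le_Lp_mul_Lq_of_nonneg hpq prod_nonneg (root_nonneg (1 / q))
    (memLp_ofReal_of_integrable_rpow hpq.pos ((root_meas _).mul hg) prod_nonneg
      (hwg.congr prod_pow.symm))
    (memLp_ofReal_of_integrable_rpow hpq.symm.pos (root_meas _) (root_nonneg _)
      (hw.congr root_pow.symm))
  rwa [integral_congr_ae split, integral_congr_ae prod_pow, integral_congr_ae root_pow] at holder

theorem intervalIntegral_weight_mul_le_rpow_mul_rpow {w g : ℝ → ℝ} {x y : ℝ}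
    (hpq : p.HolderConjugate q) (hxy : x ≤ y)
    (hw : ContinuousOn w (Set.Icc x y)) (hg : ContinuousOn g (Set.Icc x y))
    (hw_nonneg : ∀ s ∈ Set.Icc x y, 0 ≤ w s) (hg_nonneg : ∀ s ∈ Set.Icc x y, 0 ≤ g s) :
    ∫ s in x..y, w s * g s ≤
      (∫ s in x..y, w s * g s ^ p) ^ (1 / p) * (∫ s in x..y, w s) ^ (1 / q) := by
  have hwg : ContinuousOn (fun s ↦ w s * g s ^ p) (Set.Icc x y) :=
    hw.mul (hg.rpow_const fun _ _ ↦ Or.inr hpq.nonneg)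
  simp only [integral_of_le hxy, ← integral_Icc_eq_integral_Ioc]
  exact integral_weight_mul_le_rpow_mul_rpow hpq hw.integrableOn_Icc
    (hg.aestronglyMeasurable measurableSet_Icc)
    (ae_restrict_of_forall_mem measurableSet_Icc hw_nonneg)
    (ae_restrict_of_forall_mem measurableSet_Icc hg_nonneg) hwg.integrableOn_Icc

end WeightedHolder

theorem exists_sub_eq_mul_of_mul_deriv_eq_neg {w u F : ℝ → ℝ} {x y : ℝ} (hxy : x < y)
    (hu : ContinuousOn u (Set.Icc x y)) (hu_diff : DifferentiableOn ℝ u (Set.Ioo x y))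
    (hw : ∀ c ∈ Set.Ioo x y, w c ≠ 0)
    (hflux : ∀ c ∈ Set.Ioo x y, w c * deriv u c = -F c) :
    ∃ c ∈ Set.Ioo x y, u x - u y = (y - x) * (w c)⁻¹ * F c := by
  obtain ⟨c, hc, hslope⟩ := exists_deriv_eq_slope u hxy hu hu_diff
  refine ⟨c, hc, ?_⟩
  have hderiv : -deriv u c = (w c)⁻¹ * F c := by
    rw [eq_inv_mul_iff_mul_eq₀ (hw c hc), mul_neg, hflux c hc, neg_neg]
  rw [mul_assoc, ← hderiv, hslope, mul_neg, mul_div_cancel₀ _ (sub_pos.2 hxy).ne', neg_sub]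

theorem exists_oscillation_bound_of_flux {w u f : ℝ → ℝ} {lam r R : ℝ} (hlam : 0 ≤ lam)
    (hr : r ∈ Set.Ioo 0 R) (hw : ∀ s ∈ Set.Ioo 0 R, 0 < w s)
    (hu : ContinuousOn u (Set.Icc 0 R)) (hu_diff : DifferentiableOn ℝ u (Set.Ioo 0 R))
    (hf : ContinuousOn f (Set.Icc 0 R)) (hf_nonneg : ∀ s ∈ Set.Icc 0 R, 0 ≤ f s)
    (hflux : ∀ s ∈ Set.Ioo 0 R, w s * deriv u s = -lam * ∫ t in (0 : ℝ)..s, f t) :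
    u r ≤ u 0 ∧ ∃ c ∈ Set.Ioo 0 r,
      u 0 - u r ≤ lam * r * (w c)⁻¹ * ∫ s in (0 : ℝ)..R, f s := by
  have hsub : Set.Ioo 0 r ⊆ Set.Ioo 0 R := Set.Ioo_subset_Ioo_right hr.2.le
  obtain ⟨c, hc, hosc⟩ := exists_sub_eq_mul_of_mul_deriv_eq_neg
    (F := fun s ↦ lam * ∫ t in (0 : ℝ)..s, f t) hr.1
    (hu.mono (Set.Icc_subset_Icc_right hr.2.le)) (hu_diff.mono hsub)
    (fun s hs ↦ (hw s (hsub hs)).ne') fun s hs ↦ by rw [hflux s (hsub hs), neg_mul]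
  have hcR := hsub hc
  have hcoef : 0 ≤ lam * r * (w c)⁻¹ :=
    mul_nonneg (mul_nonneg hlam hr.1.le) (inv_nonneg.2 (hw c hcR).le)
  have hosc' : u 0 - u r = lam * r * (w c)⁻¹ * ∫ s in (0 : ℝ)..c, f s := by
    rw [hosc]; ring
  have hint_nonneg : 0 ≤ ∫ s in (0 : ℝ)..c, f s :=
    integral_nonneg hc.1.le fun s hs ↦ hf_nonneg s ⟨hs.1, hs.2.trans hcR.2.le⟩
  have hint_mono : ∫ s in (0 : ℝ)..c, f s ≤ ∫ s in (0 : ℝ)..R, f s :=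
    integral_mono_interval le_rfl hc.1.le hcR.2.le
      (ae_restrict_of_forall_mem measurableSet_Ioc fun s hs ↦
        hf_nonneg s (Set.Ioc_subset_Icc_self hs))
      (hf.intervalIntegrable_of_Icc (hr.1.trans hr.2).le)
  refine ⟨sub_nonneg.1 (hosc' ▸ mul_nonneg hcoef hint_nonneg), c, hc, ?_⟩
  exact hosc'.trans_le (mul_le_mul_of_nonneg_left hint_mono hcoef)

theorem exists_power_oscillation_bound_of_weight {w u : ℝ → ℝ} {lam m p r R : ℝ}
    (hlam : 0 ≤ lam) (hp : 1 < p) (hr : r ∈ Set.Ioo 0 R)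
    (hw : ContinuousOn w (Set.Icc 0 R)) (hw_pos : ∀ s ∈ Set.Ioo 0 R, 0 < w s)
    (hu : ContinuousOn u (Set.Icc 0 R)) (hu_diff : DifferentiableOn ℝ u (Set.Ioo 0 R))
    (hu_gt : ∀ s ∈ Set.Icc 0 R, -1 < u s)
    (hflux : ∀ s ∈ Set.Ioo 0 R,
      w s * deriv u s = -lam * ∫ t in (0 : ℝ)..s, w t * (1 + u t) ^ m) :
    u r ≤ u 0 ∧ ∃ c ∈ Set.Ioo 0 r,
      u 0 - u r ≤ lam * r * (w c)⁻¹ *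
        ((∫ s in (0 : ℝ)..R, w s * (1 + u s) ^ (m * p)) ^ (1 / p) *
          (∫ s in (0 : ℝ)..R, w s) ^ ((p - 1) / p)) := by
  have hR : 0 < R := hr.1.trans hr.2
  have hw_nonneg : ∀ s ∈ Set.Icc 0 R, 0 ≤ w s := by
    rw [← closure_Ioo hR.ne] at hw ⊢
    exact fun s hs ↦ le_on_closure (fun t ht ↦ (hw_pos t ht).le) continuousOn_const hw hs
  have base_pos : ∀ s ∈ Set.Icc 0 R, 0 < 1 + u s := fun s hs ↦ by linarith [hu_gt s hs]
  have power_cont : ContinuousOn (fun s ↦ (1 + u s) ^ m) (Set.Icc 0 R) :=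
    (continuousOn_const.add hu).rpow_const fun s hs ↦ Or.inl (base_pos s hs).ne'
  have power_nonneg : ∀ s ∈ Set.Icc 0 R, 0 ≤ (1 + u s) ^ m := fun s hs ↦
    rpow_nonneg (base_pos s hs).le m
  have power_rpow : ∫ s in (0 : ℝ)..R, w s * ((1 + u s) ^ m) ^ p =
      ∫ s in (0 : ℝ)..R, w s * (1 + u s) ^ (m * p) :=
    integral_congr fun s hs ↦ by
      rw [Set.uIcc_of_le hR.le] at hs
      simp only [rpow_mul (base_pos s hs).le]
  have holder := intervalIntegral_weight_mul_le_rpow_mul_rpow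
    (HolderConjugate.conjExponent hp) hR.le hw power_cont hw_nonneg power_nonneg
  rw [power_rpow, conjExponent, one_div_div] at holder
  obtain ⟨hle, c, hc, hosc⟩ := exists_oscillation_bound_of_flux hlam hr hw_pos hu hu_diff
    (hw.mul power_cont) (fun s hs ↦ mul_nonneg (hw_nonneg s hs) (power_nonneg s hs)) hflux
  have hwc := hw_pos c ⟨hc.1, hc.2.trans hr.2⟩
  have hr_pos := hr.1
  exact ⟨hle, c, hc, hosc.trans (by gcongr; exact holder)⟩

theorem inv_exp_mul_pow_pred {N : ℕ} (hN : 1 ≤ N) (α x : ℝ) :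
    (exp α * x ^ (N - 1))⁻¹ = exp (-α) * x ^ ((1 : ℤ) - (N : ℤ)) := by
  rw [mul_inv, exp_neg, ← zpow_natCast, ← zpow_neg, Nat.cast_sub hN, Nat.cast_one, neg_sub]

theorem radial_power_oscillation_bound_general
    {N : ℕ} (hN : 1 ≤ N) {R : ℝ} {a ψ : ℝ → ℝ} (ha : ContinuousOn a (Set.Icc 0 R))
    (hψ : ContinuousOn ψ (Set.Icc 0 R)) (hψpos : ∀ r ∈ Set.Ioo 0 R, 0 < ψ r)
    {w : ℝ → ℝ} (hw : ∀ r, w r = exp (a r) * ψ r ^ (N - 1))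
    {lam m : ℝ} (hlam : 0 ≤ lam)
    {u : ℝ → ℝ} (hu : ContinuousOn u (Set.Icc 0 R)) (hu_diff : DifferentiableOn ℝ u (Set.Ioo 0 R))
    (hu_gt : ∀ r ∈ Set.Icc 0 R, -1 < u r)
    (heq : ∀ r ∈ Set.Ioo 0 R,
      exp (a r) * ψ r ^ (N - 1) * deriv u r =
        -lam * ∫ s in (0 : ℝ)..r, w s * (1 + u s) ^ m)
    {p : ℝ} (hp : 1 < p) {r : ℝ} (hr : r ∈ Set.Ioo 0 R) :
    u r ≤ u 0 ∧ ∃ c ∈ Set.Ioo 0 r,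
      u 0 - u r ≤ lam * r * exp (-(a c)) * ψ c ^ ((1 : ℤ) - (N : ℤ)) *
        (∫ s in (0 : ℝ)..R, w s * (1 + u s) ^ (m * p)) ^ (1 / p) *
        (∫ s in (0 : ℝ)..R, w s) ^ ((p - 1) / p) := by
  have hw_cont : ContinuousOn w (Set.Icc 0 R) :=
    (ha.rexp.mul (hψ.pow (N - 1))).congr fun s _ ↦ hw s
  have hw_pos : ∀ s ∈ Set.Ioo 0 R, 0 < w s := fun s hs ↦
    hw s ▸ mul_pos (exp_pos _) (pow_pos (hψpos s hs) _)
  obtain ⟨hle, c, hc, hosc⟩ := exists_power_oscillation_bound_of_weight hlam hp hr hw_cont hw_pos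
    hu hu_diff hu_gt fun s hs ↦ (hw s).symm ▸ heq s hs
  refine ⟨hle, c, hc, hosc.trans_eq ?_⟩
  rw [hw c, inv_exp_mul_pow_pred hN]
  ring

theorem radial_power_oscillation_bound
    (N : ℕ) (hN : 1 ≤ N) (R : ℝ) (hR : 0 < R)
    (a ψ : ℝ → ℝ) (ha : ContinuousOn a (Set.Icc 0 R))
    (hψ : ContinuousOn ψ (Set.Icc 0 R)) (hψ0 : ∀ r ∈ Set.Icc (0:ℝ) R, 0 ≤ ψ r)
    (hψpos : ∀ r ∈ Set.Ioo (0:ℝ) R, 0 < ψ r)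
    (w : ℝ → ℝ) (hw : ∀ r, w r = exp (a r) * ψ r ^ (N - 1))
    (lam m : ℝ) (hlam : 0 < lam) (hm : 1 < m)
    (u : ℝ → ℝ) (hu : ContDiff ℝ 1 u)
    (hu0 : ∀ r ∈ Set.Icc (0:ℝ) R, 0 ≤ u r)
    (hu' : ∀ r ∈ Set.Icc (0:ℝ) R, deriv u r ≤ 0)
    (heq : ∀ r ∈ Set.Ioo (0:ℝ) R,
      exp (a r) * ψ r ^ (N - 1) * deriv u r =
        -lam * ∫ s in (0:ℝ)..r, w s * (1 + u s) ^ m) :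
    ∀ p : ℝ, 1 < p → ∀ r ∈ Set.Ioo (0:ℝ) R,
      u r ≤ u 0 ∧ ∃ c ∈ Set.Ioo (0:ℝ) r,
        u 0 - u r ≤ lam * r * exp (-(a c)) * ψ c ^ ((1:ℤ) - (N:ℤ)) *
          (∫ s in (0:ℝ)..R, w s * (1 + u s) ^ (m*p)) ^ (1/p) *
          (∫ s in (0:ℝ)..R, w s) ^ ((p-1)/p) := by
  intro p hp r hr
  exact radial_power_oscillation_bound_general hN ha hψ hψpos hw hlam.le hu.continuous.continuousOn
    (hu.differentiable one_ne_zero).differentiableOn (fun s hs ↦ by linarith [hu0 s hs]) heq hp hr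
end
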